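/- arXiv:1801.00204 — 15 statements merged into one kernel-verified Lean document; each statement's English description precedes it below -/
import Mathlib

section
/- Let c ∈ ℝ with -1 < c < 0. Then K⁺ = W^s(α) ∪ W^s(θ) ∪ W^s(p) ∪ W^s(f(p)) ∪ W^s(f²(p)). -/
open Set Filter Topology

/-- The map `f(x,y) = (xy + c, x)`. -/
noncomputable def fc (c : ℝ) : ℝ × ℝ → ℝ × ℝ := fun z => (z.1 * z.2 + c, z.1)

/-- `a₁ = (1 - √(1-4c))/2`. -/
noncomputable def a1 (c : ℝ) : ℝ := (1 - Real.sqrt (1 - 4 * c)) / 2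

/-- `a₂ = (1 + √(1-4c))/2`. -/
noncomputable def a2 (c : ℝ) : ℝ := (1 + Real.sqrt (1 - 4 * c)) / 2

def RecS (c : ℝ) (x : ℕ → ℝ) : Prop := ∀ n, x (n+2) = x (n+1) * x n + c

noncomputable def rr (c : ℝ) (n : ℕ) : ℝ := if n % 3 = 2 then 1 + c else -1

def sg (n : ℕ) : ℝ := if n % 3 = 2 then 1 else -1

def GoodS (c : ℝ) (x : ℕ → ℝ) : Prop :=
  Tendsto x atTop (𝓝 (a1 c)) ∨ Tendsto x atTop (𝓝 (a2 c)) ∨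
    ∃ i : ℕ, Tendsto (fun n => x n - rr c (n + i)) atTop (𝓝 0)

theorem RecS.shift {c : ℝ} {x : ℕ → ℝ} (h : RecS c x) (N : ℕ) : RecS c (fun n => x (n + N)) := by
  intro n
  have := h (n + N)
  simp only
  rw [show n + 2 + N = n + N + 2 by ring, show n + 1 + N = n + N + 1 by ring]
  exact this

theorem GoodS.unshift {c : ℝ} {x : ℕ → ℝ} (N : ℕ) (h : GoodS c (fun n => x (n + N))) :
    GoodS c x := by
  rcases h with h | h | ⟨i, h⟩
  · exact Or.inl ((tendsto_add_atTop_iff_nat N).1 h)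
  · exact Or.inr (Or.inl ((tendsto_add_atTop_iff_nat N).1 h))
  · refine Or.inr (Or.inr ⟨i + 2 * N, ?_⟩)
    rw [← tendsto_add_atTop_iff_nat N]
    refine h.congr (fun n => ?_)
    have : rr c (n + N + (i + 2 * N)) = rr c (n + i) := by
      unfold rr
      rw [show (n + N + (i + 2 * N)) % 3 = (n + i) % 3 by omega]
    rw [this]

theorem geo {e : ℕ → ℝ} {q : ℝ} (p : ℕ) (hp : 0 < p) (hq0 : 0 ≤ q) (hq : q < 1)
    (he : ∀ n, 0 ≤ e n) (h : ∀ n, e (n + p) ≤ q * e n) : Tendsto e atTop (𝓝 0) := by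
  have h1 : ∀ m j, e (p * m + j) ≤ q ^ m * e j := by
    intro m j
    induction m with
    | zero => simp
    | succ m ih =>
      have := h (p * m + j)
      rw [show p * (m + 1) + j = p * m + j + p by ring]
      calc _ ≤ _ := this
        _ ≤ q * (q ^ m * e j) := by gcongr
        _ = _ := by ring
  have h2 : ∀ n, e n ≤ q ^ (n / p) * ∑ j ∈ Finset.range p, e j := by
    intro n
    have := h1 (n / p) (n % p)
    rw [Nat.div_add_mod] at this
    refine this.trans ?_
    have h3 : e (n % p) ≤ ∑ j ∈ Finset.range p, e j :=
      Finset.single_le_sum (f := e) (fun i _ => he i) (Finset.mem_range.2 (Nat.mod_lt n hp))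
    gcongr
  have h4 : Tendsto (fun n : ℕ => q ^ (n / p) * ∑ j ∈ Finset.range p, e j) atTop (𝓝 0) := by
    have := ((tendsto_pow_atTop_nhds_zero_of_lt_one hq0 hq).comp
      (Nat.tendsto_div_const_atTop hp.ne')).mul_const (∑ j ∈ Finset.range p, e j)
    simpa using this
  exact squeeze_zero he h2 h4

theorem a2_facts {c : ℝ} (hc1 : -1 < c) (hc2 : c < 0) : 1 < a2 c ∧ a2 c ^ 2 = a2 c - c := by
  have h0 : 0 ≤ 1 - 4 * c := by linarith
  have hs := Real.sq_sqrt h0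
  have h1 : 1 < Real.sqrt (1 - 4 * c) := by
    rw [Real.lt_sqrt (by norm_num)]; linarith
  unfold a2
  constructor
  · linarith
  · nlinarith

theorem a1_char {c M : ℝ} (hM : M < 0) (h : M = M * M + c) : M = a1 c := by
  unfold a1
  have : Real.sqrt (1 - 4 * c) = 1 - 2 * M := by
    rw [show 1 - 4 * c = (1 - 2 * M) ^ 2 by nlinarith]
    exact Real.sqrt_sq (by linarith)
  rw [this]; ring

theorem lim_sub {x : ℕ → ℝ} {m M A B : ℝ} {c : ℝ} (h : RecS c x)
    (hlo : ∀ ε > 0, ∀ᶠ n in atTop, m - ε < x n)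
    (hhi : ∀ ε > 0, ∀ᶠ n in atTop, x n < M + ε) (hA : ∀ n, A ≤ x n) (hB : ∀ n, x n ≤ B)
    (L : ℝ) (hL : ∀ ε > 0, ∃ᶠ n in atTop, |x n - L| < ε) :
    ∃ a b d, m ≤ a ∧ a ≤ M ∧ m ≤ b ∧ b ≤ M ∧ m ≤ d ∧ d ≤ M ∧ L = a * b + c ∧ a = b * d + c := by
  have h3 : ∀ ε > 0, ∃ᶠ n in atTop, |x (n + 3) - L| < ε := by
    intro ε hε
    have := hL ε hε
    rw [frequently_atTop] at this ⊢
    intro a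
    obtain ⟨b, hb, hb'⟩ := this (a + 3)
    refine ⟨b - 3, by omega, ?_⟩
    rwa [show b - 3 + 3 = b by omega]
  obtain ⟨φ, hφ, hφ'⟩ := extraction_forall_of_frequently
    (P := fun (j : ℕ) (n : ℕ) => |x (n + 3) - L| < 1 / ((j : ℝ) + 1)) (fun j => h3 _ (by positivity))
  have hlim : Tendsto (fun j => x (φ j + 3)) atTop (𝓝 L) := by
    rw [tendsto_iff_dist_tendsto_zero]
    exact squeeze_zero (fun _ => dist_nonneg) (fun j => (by rw [Real.dist_eq]; exact (hφ' j).le))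
      tendsto_one_div_add_atTop_nhds_zero_nat
  obtain ⟨⟨a, b, d⟩, -, ψ, hψ, ht⟩ := (isCompact_Icc (a := A) (b := B)).prod
    ((isCompact_Icc (a := A) (b := B)).prod (isCompact_Icc (a := A) (b := B))) |>.tendsto_subseq
    (x := fun j => (x (φ j + 2), x (φ j + 1), x (φ j)))
    (fun j => ⟨⟨hA _, hB _⟩, ⟨hA _, hB _⟩, ⟨hA _, hB _⟩⟩)
  have ta : Tendsto (fun j => x (φ (ψ j) + 2)) atTop (𝓝 a) :=
    (continuous_fst.tendsto _).comp ht
  have tb : Tendsto (fun j => x (φ (ψ j) + 1)) atTop (𝓝 b) :=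
    ((continuous_fst.comp continuous_snd).tendsto _).comp ht
  have td : Tendsto (fun j => x (φ (ψ j))) atTop (𝓝 d) :=
    ((continuous_snd.comp continuous_snd).tendsto _).comp ht
  have tL : Tendsto (fun j => x (φ (ψ j) + 3)) atTop (𝓝 L) := hlim.comp hψ.tendsto_atTop
  have tφ : Tendsto (fun j => φ (ψ j)) atTop atTop := hφ.tendsto_atTop.comp hψ.tendsto_atTop
  have key : ∀ (i : ℕ) (l : ℝ), Tendsto (fun j => x (φ (ψ j) + i)) atTop (𝓝 l) → m ≤ l ∧ l ≤ M := by
    intro i l hl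
    have ti : Tendsto (fun j => φ (ψ j) + i) atTop atTop :=
      tendsto_atTop_mono (fun j => Nat.le_add_right _ i) tφ
    constructor
    · refine le_of_forall_pos_le_add (fun ε hε => ?_)
      have := ge_of_tendsto hl ((ti.eventually (hlo ε hε)).mono (fun _ h => h.le))
      linarith
    · refine le_of_forall_pos_le_add (fun ε hε => ?_)
      exact le_of_tendsto hl ((ti.eventually (hhi ε hε)).mono (fun _ h => h.le))
  refine ⟨a, b, d, (key 2 a ta).1, (key 2 a ta).2, (key 1 b tb).1, (key 1 b tb).2,
    (key 0 d td).1, (key 0 d td).2, ?_, ?_⟩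
  · refine tendsto_nhds_unique tL (((ta.mul tb).add_const c).congr (fun j => ?_))
    exact (h (φ (ψ j) + 1)).symm
  · refine tendsto_nhds_unique ta (((tb.mul td).add_const c).congr (fun j => ?_))
    exact (h (φ (ψ j))).symm

theorem limits {x : ℕ → ℝ} {A B : ℝ} {c : ℝ} (h : RecS c x)
    (hA : ∀ n, A ≤ x n) (hB : ∀ n, x n ≤ B) :
    ∃ m M, A ≤ m ∧ m ≤ M ∧ M ≤ B ∧ (m = M → Tendsto x atTop (𝓝 M)) ∧
      (∃ a b d, m ≤ a ∧ a ≤ M ∧ m ≤ b ∧ b ≤ M ∧ m ≤ d ∧ d ≤ M ∧ M = a * b + c ∧ a = b * d + c) ∧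
      (∃ a b d, m ≤ a ∧ a ≤ M ∧ m ≤ b ∧ b ≤ M ∧ m ≤ d ∧ d ≤ M ∧ m = a * b + c ∧ a = b * d + c) := by
  have bA : IsBoundedUnder (· ≥ ·) atTop x := isBoundedUnder_of ⟨A, hA⟩
  have bB : IsBoundedUnder (· ≤ ·) atTop x := isBoundedUnder_of ⟨B, hB⟩
  have hlo : ∀ ε > 0, ∀ᶠ n in atTop, liminf x atTop - ε < x n := fun ε hε =>
    eventually_lt_of_lt_liminf (by linarith) bA
  have hhi : ∀ ε > 0, ∀ᶠ n in atTop, x n < limsup x atTop + ε := fun ε hε =>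
    eventually_lt_of_limsup_lt (by linarith) bB
  refine ⟨liminf x atTop, limsup x atTop, ?_, liminf_le_limsup bB bA, ?_, ?_, ?_, ?_⟩
  · exact le_liminf_of_le bB.isCoboundedUnder_ge (Eventually.of_forall hA)
  · exact limsup_le_of_le bA.isCoboundedUnder_le (Eventually.of_forall hB)
  · intro he
    exact tendsto_of_liminf_eq_limsup he rfl bB bA
  · refine lim_sub h hlo hhi hA hB _ (fun ε hε => ?_)
    have h1 : ∃ᶠ n in atTop, limsup x atTop - ε < x n :=
      frequently_lt_of_lt_limsup bA.isCoboundedUnder_le (by linarith)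
    refine (h1.and_eventually (hhi ε hε)).mono (fun n hn => ?_)
    rw [abs_lt]; constructor <;> linarith [hn.1, hn.2]
  · refine lim_sub h hlo hhi hA hB _ (fun ε hε => ?_)
    have h1 : ∃ᶠ n in atTop, x n < liminf x atTop + ε :=
      frequently_lt_of_liminf_lt bB.isCoboundedUnder_ge (by linarith)
    refine (h1.and_eventually (hlo ε hε)).mono (fun n hn => ?_)
    rw [abs_lt]; constructor <;> linarith [hn.1, hn.2]

theorem box_prod {m M a b : ℝ} (hm : m ≤ 0) (hM : 0 ≤ M) (h1 : m ≤ a) (h2 : a ≤ M)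
    (h3 : m ≤ b) (h4 : b ≤ M) : m * M ≤ a * b ∧ (a * b ≤ m * m ∨ a * b ≤ M * M) := by
  constructor
  · rcases le_total 0 a with ha | ha <;> rcases le_total 0 b with hb | hb <;> nlinarith
  · rcases le_total 0 a with ha | ha <;> rcases le_total 0 b with hb | hb
    · right; nlinarith
    · left; nlinarith
    · left; nlinarith
    · left; nlinarith

theorem alg_neg {k s t v w v' w' a b : ℝ} (hk : 0 < k) (hk1 : k < 1) (ht : 0 < t) (hts : t ≤ s)
    (hs : s < 1) (hv : t ≤ v) (hv2 : v ≤ s) (hw : t ≤ w) (hw2 : w ≤ s)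
    (hv' : t ≤ v') (hv2' : v' ≤ s) (hw' : t ≤ w') (hw2' : w' ≤ s)
    (e1 : s = v ^ 2 * w - k * v + k) (e2 : t = v' ^ 2 * w' - k * v' + k)
    (ha : 0 ≤ a) (ha2 : a ≤ s) (hb : 0 ≤ b) (hb2 : b ≤ s) (e3 : t = k - a * b) : s = t := by
  have h1 : s ≤ v ^ 2 * s - k * v + k := by nlinarith [sq_nonneg v]
  have h2 : t ≥ k - s * s := by nlinarith
  have h3 : s ≤ s ^ 2 * s - k * s + k ∨ s ≤ t ^ 2 * s - k * t + k := by
    by_contra! hh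
    obtain ⟨g1, g2⟩ := hh
    rcases hts.eq_or_lt with rfl | hlt
    · have : v = t := le_antisymm hv2 hv
      subst this; linarith
    · have hid : (s - v) * (t ^ 2 * s - k * t + k) + (v - t) * (s ^ 2 * s - k * s + k)
          - (s - t) * (v ^ 2 * s - k * v + k) = s * ((s - t) * (s - v) * (v - t)) := by ring
      have h5 : 0 ≤ s * ((s - t) * (s - v) * (v - t)) := by
        apply mul_nonneg (by linarith)
        apply mul_nonneg (mul_nonneg _ _) <;> linarith
      have q1 : (s - t) * s ≤ (s - t) * (v ^ 2 * s - k * v + k) :=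
        mul_le_mul_of_nonneg_left h1 (by linarith)
      have q3 : (s - v) * (t ^ 2 * s - k * t + k) ≤ (s - v) * s :=
        mul_le_mul_of_nonneg_left g2.le (by linarith)
      rcases hv.eq_or_lt with h | h
      · subst h; linarith
      · have q4 : (v - t) * (s ^ 2 * s - k * s + k) < (v - t) * s :=
          mul_lt_mul_of_pos_left g1 (by linarith)
        have q6 : (s - v) * s + (v - t) * s = (s - t) * s := by ring
        linarith
  rcases h3 with h3 | h3
  · have h4 : s * (1 + s) ≤ k := by
      by_contra! hh
      have : 0 < (1 - s) * (s * (1 + s) - k) := mul_pos (by linarith) (by linarith)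
      nlinarith
    nlinarith
  · have h4 : s * (1 + t) ≤ k := by
      by_contra! hh
      have : 0 < (1 - t) * (s * (1 + t) - k) := mul_pos (by linarith) (by linarith)
      nlinarith
    have h5 : 2 * s * t ≤ k := by nlinarith
    have h6 : t ≥ v' ^ 2 * t - k * v' + k := by nlinarith [sq_nonneg v']
    have h7 : t ≥ s ^ 2 * t - k * s + k := by
      have : 0 ≤ (s - v') * (k - t * (s + v')) := by
        apply mul_nonneg (by linarith)
        nlinarith
      nlinarith
    have h8 : k ≤ t * (1 + s) := by
      by_contra! hh
      have : 0 < (1 - s) * (k - t * (1 + s)) := mul_pos (by linarith) (by linarith)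
      nlinarith
    apply le_antisymm _ hts
    nlinarith

theorem alg_pos {c m M a b a' b' : ℝ} (hc2 : c < 0) (hM : 0 ≤ M) (hM1 : M < 1) (hm1 : -1 < m)
    (b1 : m ≤ a) (b2 : a ≤ M) (b3 : m ≤ b) (b4 : b ≤ M) (b7 : M = a * b + c)
    (b1' : m ≤ a') (b2' : a' ≤ M) (b3' : m ≤ b') (b4' : b' ≤ M) (b7' : m = a' * b' + c) :
    False := by
  have hMM : M * M ≤ M := by nlinarith
  have hm : m ≤ 0 := by
    by_contra! hm
    have : a * b ≤ M * M := mul_le_mul b2 b4 (by linarith) hM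
    linarith
  have p1 := (box_prod hm hM b1 b2 b3 b4).2
  have p2 := (box_prod hm hM b1' b2' b3' b4').1
  have p3 : M ≤ m * m + c := by
    rcases p1 with p | p <;> linarith
  have p4 : (-m) * (1 - M) ≤ -c := by linarith
  have p5 : (-m) * (1 - m * m - c) ≤ (-m) * (1 - M) :=
    mul_le_mul_of_nonneg_left (by linarith) (by linarith)
  have p6 : (-m) * (1 + (-m)) ≤ -c := by
    by_contra! hh
    have : 0 < (1 - (-m)) * ((-m) * (1 + (-m)) + c) := mul_pos (by linarith) (by linarith)
    linarith
  have : m = 0 := by linarith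
  subst this
  linarith

theorem box_conv {x : ℕ → ℝ} {c s : ℝ} (hc1 : -1 < c) (hc2 : c < 0) (h : RecS c x) (hs0 : 0 ≤ s)
    (hs : s < 1) (hs2 : 0 ≤ s ^ 2 + c) (hA : ∀ n, -s ≤ x n) (hB : ∀ n, x n ≤ s ^ 2 + c) :
    GoodS c x := by
  obtain ⟨m, M, h1, h2, h3, h4, ⟨a, b, d, b1, b2, b3, b4, b5, b6, b7, b8⟩,
    ⟨a', b', d', b1', b2', b3', b4', b5', b6', b7', b8'⟩⟩ := limits h hA hB
  left
  have hs3 : s ^ 2 < 1 := by nlinarith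
  have hM1 : M < 1 := by linarith
  have hMn : M < 0 := by
    by_contra! hM
    exact alg_pos hc2 hM hM1 (by linarith) b1 b2 b3 b4 b7 b1' b2' b3' b4' b7'
  have he : -m = -M := by
    refine alg_neg (k := -c) (s := -m) (t := -M) (v := -b') (w := -d') (v' := -b) (w' := -d)
      (a := -a) (b := -b) (by linarith) (by linarith) (by linarith) (by linarith) (by linarith)
      (by linarith) (by linarith) (by linarith) (by linarith) (by linarith) (by linarith)
      (by linarith) (by linarith) ?_ ?_ (by linarith) (by linarith) (by linarith) (by linarith) ?_
    · rw [b7', b8']; ring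
    · rw [b7, b8]; ring
    · rw [b7]; ring
  have he' : m = M := by linarith
  subst he'
  have : m = a1 c := by
    refine a1_char hMn ?_
    rw [le_antisymm b2 b1, le_antisymm b4 b3] at b7
    exact b7
  rw [← this]
  exact h4 rfl

theorem S_int {c u v : ℝ} (hc1 : -1 < c) (hc2 : c < 0) (hu : -1 < u) (hu2 : u < 1 + c)
    (hv : -1 ≤ v) (hv2 : v ≤ 1 + c) : -1 < u * v + c ∧ u * v + c < 1 + c := by
  constructor
  · rcases le_total 0 u with ha | ha <;> rcases le_total 0 v with hb | hb
    · nlinarith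
    · nlinarith
    · have : -u * v ≤ -u * (1 + c) := by apply mul_le_mul_of_nonneg_left hv2; linarith
      nlinarith
    · nlinarith
  · rcases le_total 0 u with ha | ha <;> rcases le_total 0 v with hb | hb <;> nlinarith

theorem S_int_conv {x : ℕ → ℝ} {c : ℝ} (hc1 : -1 < c) (hc2 : c < 0) (h : RecS c x)
    (h0 : -1 < x 0) (h0' : x 0 < 1 + c) (h1 : -1 < x 1) (h1' : x 1 < 1 + c) : GoodS c x := by
  obtain ⟨s, hs, hs0, hs1, g0, g0', g1, g1'⟩ : ∃ s : ℝ, s < 1 ∧ 0 < s ∧ 0 < s ^ 2 + c ∧ -s < x 0 ∧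
      x 0 < s ^ 2 + c ∧ -s < x 1 ∧ x 1 < s ^ 2 + c := by
    have c1 : Tendsto (fun s : ℝ => s ^ 2 + c) (𝓝[<] 1) (𝓝 (1 + c)) := by
      have : ContinuousAt (fun s : ℝ => s ^ 2 + c) 1 := by fun_prop
      have := this.tendsto.mono_left (nhdsWithin_le_nhds (s := Iio 1))
      simpa using this
    have c2 : Tendsto (fun s : ℝ => -s) (𝓝[<] 1) (𝓝 (-1)) :=
      (continuous_neg.tendsto (1:ℝ)).mono_left nhdsWithin_le_nhds
    have c3 : Tendsto (fun s : ℝ => s) (𝓝[<] 1) (𝓝 1) := nhdsWithin_le_nhds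
    have c4 : ∀ᶠ s : ℝ in 𝓝[<] 1, s < 1 := self_mem_nhdsWithin
    exact (c4.and ((c3.eventually_const_lt zero_lt_one).and
      ((c1.eventually_const_lt (by linarith)).and ((c2.eventually_lt_const h0).and
      ((c1.eventually_const_lt h0').and ((c2.eventually_lt_const h1).and
      (c1.eventually_const_lt h1'))))))).exists
  have key : ∀ n, (-s ≤ x n ∧ x n ≤ s ^ 2 + c) ∧ (-s ≤ x (n+1) ∧ x (n+1) ≤ s ^ 2 + c) := by
    intro n
    induction n with
    | zero => exact ⟨⟨g0.le, g0'.le⟩, ⟨g1.le, g1'.le⟩⟩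
    | succ n ih =>
      obtain ⟨⟨i1, i2⟩, ⟨i3, i4⟩⟩ := ih
      refine ⟨⟨i3, i4⟩, ?_⟩
      have hr := h n
      obtain ⟨p1, p2⟩ := box_prod (by linarith) hs1.le i3 i4 i1 i2
      rw [show n + 1 + 1 = n + 2 by ring, hr]
      constructor
      · have : 0 ≤ (1 - s) * (s * (1 + s) + c) := mul_nonneg (by linarith) (by nlinarith)
        nlinarith
      · rcases p2 with p | p
        · nlinarith
        · have : s ^ 2 + c ≤ s := by nlinarith
          nlinarith
  exact box_conv hc1 hc2 h hs0.le hs hs1.le (fun n => (key n).1.1) (fun n => (key n).1.2)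

theorem rr_rec (c : ℝ) (i : ℕ) : RecS c (fun n => rr c (n + i)) := by
  intro n
  simp only [rr]
  have : (n + i) % 3 = 0 ∨ (n + i) % 3 = 1 ∨ (n + i) % 3 = 2 := by omega
  rcases this with g | g | g
  · rw [if_pos (by omega), if_neg (by omega), if_neg (by omega)]; ring
  · rw [if_neg (by omega), if_pos (by omega), if_neg (by omega)]; ring
  · rw [if_neg (by omega), if_neg (by omega), if_pos (by omega)]; ring

theorem rec_unique {c : ℝ} {x y : ℕ → ℝ} (hx : RecS c x) (hy : RecS c y) (h0 : x 0 = y 0)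
    (h1 : x 1 = y 1) : ∀ n, x n = y n := by
  have : ∀ n, x n = y n ∧ x (n+1) = y (n+1) := by
    intro n
    induction n with
    | zero => exact ⟨h0, h1⟩
    | succ n ih =>
      refine ⟨ih.2, ?_⟩
      rw [show n + 1 + 1 = n + 2 by ring, hx n, hy n, ih.1, ih.2]
  exact fun n => (this n).1

theorem S_conv {x : ℕ → ℝ} {c : ℝ} (hc1 : -1 < c) (hc2 : c < 0) (h : RecS c x)
    (h0 : -1 ≤ x 0) (h0' : x 0 ≤ 1 + c) (h1 : -1 ≤ x 1) (h1' : x 1 ≤ 1 + c) : GoodS c x := by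
  have cyc : ∀ i, x 0 = rr c (0 + i) → x 1 = rr c (1 + i) → GoodS c x := by
    intro i e0 e1
    have := rec_unique h (rr_rec c i) e0 e1
    refine Or.inr (Or.inr ⟨i, ?_⟩)
    simp [this]
  have r2 := h 0
  have r3 := h 1
  simp only [zero_add, Nat.reduceAdd] at r2 r3
  by_cases k1 : -1 < x 1 ∧ x 1 < 1 + c
  · have q2 := S_int hc1 hc2 k1.1 k1.2 h0 h0'
    rw [← r2] at q2
    exact GoodS.unshift 1 (S_int_conv hc1 hc2 (h.shift 1) k1.1 k1.2 q2.1 q2.2)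
  by_cases k0 : -1 < x 0 ∧ x 0 < 1 + c
  · have q2 := S_int hc1 hc2 k0.1 k0.2 h1 h1'
    rw [mul_comm, ← r2] at q2
    have q3 := S_int hc1 hc2 q2.1 q2.2 h1 h1'
    rw [← r3] at q3
    exact GoodS.unshift 2 (S_int_conv hc1 hc2 (h.shift 2) q2.1 q2.2 q3.1 q3.2)
  have e0 : x 0 = -1 ∨ x 0 = 1 + c := by
    rcases h0.eq_or_lt with g | g
    · exact Or.inl g.symm
    · right; by_contra hh; exact k0 ⟨g, lt_of_le_of_ne h0' hh⟩
  have e1 : x 1 = -1 ∨ x 1 = 1 + c := by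
    rcases h1.eq_or_lt with g | g
    · exact Or.inl g.symm
    · right; by_contra hh; exact k1 ⟨g, lt_of_le_of_ne h1' hh⟩
  rcases e0 with e0 | e0 <;> rcases e1 with e1 | e1
  · exact cyc 0 (by simp [rr, e0]) (by simp [rr, e1])
  · exact cyc 1 (by simp [rr, e0]) (by simp [rr, e1])
  · exact cyc 2 (by simp [rr, e0]) (by simp [rr, e1])
  · have q2 : -1 < x 2 ∧ x 2 < 1 + c := by
      rw [r2, e0, e1]; constructor <;> nlinarith
    have q3 := S_int hc1 hc2 q2.1 q2.2 h1 h1'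
    rw [← r3] at q3
    exact GoodS.unshift 2 (S_int_conv hc1 hc2 (h.shift 2) q2.1 q2.2 q3.1 q3.2)

theorem no_grow {s : ℕ → ℝ} {a B : ℝ} (ha : 1 < a) (h0 : 0 < s 0) (hs : ∀ n, a * s n ≤ s (n+1))
    (hB : ∀ n, s n ≤ B) : False := by
  have h1 : ∀ n, a ^ n * s 0 ≤ s n := by
    intro n
    induction n with
    | zero => simp
    | succ n ih =>
      calc a ^ (n+1) * s 0 = a * (a ^ n * s 0) := by ring
        _ ≤ a * s n := by gcongr
        _ ≤ _ := hs n
  obtain ⟨n, hn⟩ := pow_unbounded_of_one_lt (B / s 0) ha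
  rw [div_lt_iff₀ h0] at hn
  linarith [h1 n, hB n]

theorem pos_hi {x : ℕ → ℝ} {c B : ℝ} (hc1 : -1 < c) (hc2 : c < 0) (h : RecS c x)
    (hB : ∀ n, x n ≤ B) (h0 : a2 c ≤ x 0) (h1 : a2 c ≤ x 1) : GoodS c x := by
  obtain ⟨g1, g2⟩ := a2_facts hc1 hc2
  set a := a2 c with ha
  have key : ∀ n, a ≤ x n ∧ a ≤ x (n+1) := by
    intro n
    induction n with
    | zero => exact ⟨h0, h1⟩
    | succ n ih =>
      refine ⟨ih.2, ?_⟩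
      rw [show n + 1 + 1 = n + 2 by ring, h n]
      nlinarith [ih.1, ih.2]
  by_cases hz : x 0 = a ∧ x 1 = a
  · have : ∀ n, x n = a := by
      refine rec_unique h (y := fun _ => a) (fun n => by simp only; nlinarith) hz.1 hz.2
    right; left
    rw [show x = fun _ => a from funext this]
    exact tendsto_const_nhds
  · exfalso
    refine no_grow (s := fun n => (x n - a) + (x (n+1) - a)) (B := 2 * B - 2 * a) g1 ?_ ?_ ?_
    · by_contra! hh
      simp only [zero_add] at hh
      exact hz ⟨by linarith, by linarith⟩
    · intro n
      obtain ⟨i1, i2⟩ := key n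
      have := h n
      rw [show n + 1 + 1 = n + 2 by ring, h n]
      have : 0 ≤ (x n - a) * (x (n+1) - a) := mul_nonneg (by linarith) (by linarith)
      nlinarith
    · intro n
      linarith [hB n, hB (n+1)]

theorem pos_lo {x : ℕ → ℝ} {c : ℝ} (hc1 : -1 < c) (hc2 : c < 0) (h : RecS c x)
    (hp : ∀ n, 0 ≤ x n) (h0 : x 0 ≤ a2 c) (h1 : x 1 ≤ a2 c) : GoodS c x := by
  obtain ⟨g1, g2⟩ := a2_facts hc1 hc2
  set a := a2 c with ha
  by_cases hz : x 0 = a ∧ x 1 = a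
  · have : ∀ n, x n = a := by
      refine rec_unique h (y := fun _ => a) (fun n => by simp only; nlinarith) hz.1 hz.2
    right; left
    rw [show x = fun _ => a from funext this]
    exact tendsto_const_nhds
  · exfalso
    have r2 := h 0
    have r3 := h 1
    simp only [zero_add, Nat.reduceAdd] at r2 r3
    have x2 : x 2 < a := by
      have : x 1 * x 0 < a * a := by
        by_cases h00 : x 0 = a
        · have : x 1 < a := lt_of_le_of_ne h1 (fun hh => hz ⟨h00, hh⟩)
          rw [h00]; nlinarith
        · have : x 0 < a := lt_of_le_of_ne h0 h00
          nlinarith [hp 0, hp 1]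
      nlinarith
    have x3 : x 3 < a := by
      have := hp 1
      have := hp 2
      nlinarith
    set t := max (x 2) (x 3) with ht
    have ht1 : t < a := max_lt x2 x3
    have ht0 : 0 ≤ t := (hp 2).trans (le_max_left _ _)
    have htt : t * t + c ≤ t := by nlinarith
    have key : ∀ n, x (n+2) ≤ t ∧ x (n+3) ≤ t := by
      intro n
      induction n with
      | zero => exact ⟨le_max_left _ _, le_max_right _ _⟩
      | succ n ih =>
        refine ⟨ih.2, ?_⟩
        have := h (n+2)
        rw [show n + 1 + 3 = n + 2 + 2 by ring, this]
        have := hp (n+2)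
        have := hp (n+3)
        have : x (n + 3) * x (n + 2) ≤ t * t := mul_le_mul ih.2 ih.1 (hp _) ht0
        have e : n + 2 + 1 = n + 3 := by ring
        rw [e]; linarith
    obtain ⟨m, M, k1, k2, k3, k4, ⟨a', b, d, b1, b2, b3, b4, b5, b6, b7, b8⟩, -⟩ :=
      limits (h.shift 2) (A := 0) (B := t) (fun n => hp _) (fun n => (key n).1)
    have : a' * b ≤ M * M := by nlinarith
    nlinarith

theorem pos_conv {x : ℕ → ℝ} {c B : ℝ} (hc1 : -1 < c) (hc2 : c < 0) (h : RecS c x)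
    (hB : ∀ n, x n ≤ B) (hp : ∀ n, 0 ≤ x n) : GoodS c x := by
  by_cases k1 : ∃ n, a2 c ≤ x n ∧ a2 c ≤ x (n+1)
  · obtain ⟨n, i1, i2⟩ := k1
    exact GoodS.unshift n (pos_hi hc1 hc2 (h.shift n) (fun _ => hB _) (by simpa using i1)
      (by simpa [add_comm] using i2))
  by_cases k2 : ∃ n, x n ≤ a2 c ∧ x (n+1) ≤ a2 c
  · obtain ⟨n, i1, i2⟩ := k2
    exact GoodS.unshift n (pos_lo hc1 hc2 (h.shift n) (fun _ => hp _) (by simpa using i1)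
      (by simpa [add_comm] using i2))
  push Not at k1 k2
  -- alternate
  have main : ∀ y : ℕ → ℝ, RecS c y → (∀ n, y n ≤ B) → (∀ n, 0 ≤ y n) →
      (∀ n, a2 c ≤ y n → y (n+1) < a2 c) → (∀ n, y n ≤ a2 c → a2 c < y (n+1)) → a2 c < y 0 →
      GoodS c y := by
    clear k1 k2 h hB hp x
    intro x h hB hp k1 k2 h0
    obtain ⟨g1, g2⟩ := a2_facts hc1 hc2
    set a := a2 c with ha
    have alt : ∀ n, a < x (2*n) ∧ x (2*n+1) < a := by
      intro n
      induction n with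
      | zero => exact ⟨h0, k1 0 h0.le⟩
      | succ n ih =>
        have := k2 _ ih.2.le
        exact ⟨this, k1 _ this.le⟩
    have step : ∀ n, a^2 < x (2*n+2) → x (2*n+2) ≤ x (2*n) + c := by
      intro n hn
      have r1 := h (2*n)
      have r2 := h (2*n+1)
      have i := (alt (n+1)).2
      have e1 : 2 * (n+1) + 1 = 2 * n + 1 + 2 := by ring
      rw [e1, r2, show 2*n+1+1 = 2*n+2 by ring] at i
      have p1 := hp (2*n+1)
      have : x (2*n+1) < 1 := by
        by_contra! hh
        nlinarith
      have := (alt n).1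
      nlinarith
    obtain ⟨N, hN⟩ : ∃ N, x (2*N+2) ≤ a^2 := by
      by_contra! hh
      have : ∀ n : ℕ, x (2*n) ≤ x 0 + n * c := by
        intro n
        induction n with
        | zero => simp
        | succ n ih =>
          have := step n (hh n)
          rw [show 2 * (n+1) = 2*n+2 by ring]
          push_cast
          linarith
      obtain ⟨n, hn⟩ := exists_nat_gt (x 0 / (-c))
      rw [div_lt_iff₀ (by linarith)] at hn
      have := this n
      have := hp (2*n)
      linarith
    have hN' : ∀ n, x (2*(n+N)+2) ≤ a^2 := by
      intro n
      induction n with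
      | zero => simpa using hN
      | succ n ih =>
        by_contra! hh
        have := step (n+1+N) hh
        rw [show 2 * (n+1+N) = 2*(n+N)+2 by ring] at this hh
        linarith
    -- x (2(n+N)+1) -> a
    have rel : ∀ n, 0 ≤ a - x (2*(n+N)+1) ∧
        a - x (2*(n+1+N)+1) ≤ a^2/(1+a) * (a - x (2*(n+N)+1)) ∧
        0 ≤ x (2*(n+N)+2) - a ∧ x (2*(n+N)+2) - a ≤ a * (a - x (2*(n+N)+1)) := by
      intro n
      have b := hN' n
      obtain ⟨i1, i2⟩ := alt (n+N)
      obtain ⟨i3, i4⟩ := alt (n+N+1)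
      obtain ⟨i5, i6⟩ := alt (n+N+2)
      have r3 := h (2*(n+N)+1)
      have r4 := h (2*(n+N)+2)
      have p3 := hp (2*(n+N)+3)
      rw [show 2*(n+1+N)+1 = 2*(n+N)+3 by ring]
      rw [show 2*(n+N+1) = 2*(n+N)+2 by ring] at i3 i4
      rw [show 2*(n+N+2) = 2*(n+N)+4 by ring] at i5
      rw [show 2*(n+N)+1+2 = 2*(n+N)+3 by ring, show 2*(n+N)+1+1 = 2*(n+N)+2 by ring] at r3
      rw [show 2*(n+N)+2+2 = 2*(n+N)+4 by ring, show 2*(n+N)+2+1 = 2*(n+N)+3 by ring] at r4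
      rw [show 2*(n+N)+2+1 = 2*(n+N)+3 by ring] at i4
      generalize x (2*(n+N)+1) = X1 at *
      generalize x (2*(n+N)+2) = X2 at *
      generalize x (2*(n+N)+3) = X3 at *
      generalize x (2*(n+N)+4) = X4 at *
      have f1 : a - X3 = X2 * (a - X1) - a * (X2 - a) := by nlinarith
      have f2 : X4 - a = X3 * (X2 - a) - a * (a - X3) := by nlinarith
      have f3 : a - X3 ≤ X2 - a := by
        by_contra! hh
        nlinarith
      refine ⟨by linarith, ?_, by linarith, ?_⟩
      · rw [div_mul_eq_mul_div, le_div_iff₀ (by linarith)]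
        have : X2 * (a - X1) ≤ a^2 * (a - X1) := by
          apply mul_le_mul_of_nonneg_right b; linarith
        nlinarith
      · have : X2 * (a - X1) ≤ a^2 * (a - X1) := by
          apply mul_le_mul_of_nonneg_right b; linarith
        have : a * (X2 - a) ≤ a * (a * (a - X1)) := by nlinarith
        exact le_of_mul_le_mul_left this (by linarith)
    have t1 : Tendsto (fun n => a - x (2*(n+N)+1)) atTop (𝓝 0) := by
      refine geo 1 one_pos (q := a^2/(1+a)) (by positivity) ?_ (fun n => (rel n).1)
        (fun n => (rel n).2.1)
      rw [div_lt_one (by linarith)]; linarith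
    have t2 : Tendsto (fun n => x (2*(n+N)+2) - a) atTop (𝓝 0) := by
      refine squeeze_zero (fun n => (rel n).2.2.1) (fun n => (rel n).2.2.2) ?_
      simpa using t1.const_mul a
    refine GoodS.unshift (2*N+1) (Or.inr (Or.inl ?_))
    rw [← ha]
    have t1' : Tendsto (fun n => x (2*(n+N)+1)) atTop (𝓝 a) := by
      simpa using t1.const_sub a
    have t2' : Tendsto (fun n => x (2*(n+N)+2)) atTop (𝓝 a) := by
      simpa using t2.add_const a
    rw [Metric.tendsto_atTop] at t1' t2' ⊢
    intro ε hε
    obtain ⟨N1, q1⟩ := t1' ε hε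
    obtain ⟨N2, q2⟩ := t2' ε hε
    refine ⟨2 * (N1 + N2), fun n hn => ?_⟩
    obtain ⟨k, hk⟩ := Nat.even_or_odd' n
    rcases hk with hk | hk
    · have := q1 k (by omega)
      rwa [show n + (2*N+1) = 2*(k+N)+1 by omega]
    · have := q2 k (by omega)
      rwa [show n + (2*N+1) = 2*(k+N)+2 by omega]
  by_cases h0 : a2 c < x 0
  · exact main x h hB hp k1 k2 h0
  · refine GoodS.unshift 1 (main _ (h.shift 1) (fun _ => hB _) (fun _ => hp _)
      (fun n => k1 (n+1)) (fun n => k2 (n+1)) (k2 0 (not_lt.1 h0)))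

theorem cyc_conv {x : ℕ → ℝ} {c B : ℝ} (hc1 : -1 < c) (hc2 : c < 0) (h : RecS c x)
    (hB : ∀ n, |x n| ≤ B)
    (hS : ∀ n, ¬ (-1 ≤ x n ∧ x n ≤ 1 + c ∧ -1 ≤ x (n+1) ∧ x (n+1) ≤ 1 + c))
    (hpat : ∀ j, x (3*j) < 0 ∧ x (3*j+1) < 0 ∧ 0 ≤ x (3*j+2)) : GoodS c x := by
  set y : ℕ → ℝ := fun n => sg n * x n with hy
  set ρ : ℕ → ℝ := fun n => sg n * rr c n with hρ
  have sgsg : ∀ n, sg (n+2) = sg (n+1) * sg n := by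
    intro n
    have : n % 3 = 0 ∨ n % 3 = 1 ∨ n % 3 = 2 := by omega
    unfold sg
    rcases this with g | g | g
    · rw [if_pos (by omega), if_neg (by omega), if_neg (by omega)]; ring
    · rw [if_neg (by omega), if_pos (by omega), if_neg (by omega)]; ring
    · rw [if_neg (by omega), if_neg (by omega), if_pos (by omega)]; ring
  have sgabs : ∀ n, |sg n| = 1 := by
    intro n; unfold sg; split_ifs <;> simp
  have y0 : ∀ n, 0 ≤ y n := by
    intro n
    have : n % 3 = 0 ∨ n % 3 = 1 ∨ n % 3 = 2 := by omega
    simp only [hy]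
    unfold sg
    rcases this with g | g | g
    · rw [if_neg (by omega)]
      have := (hpat (n/3)).1
      rw [show 3 * (n/3) = n by omega] at this
      linarith
    · rw [if_neg (by omega)]
      have := (hpat (n/3)).2.1
      rw [show 3 * (n/3) + 1 = n by omega] at this
      linarith
    · rw [if_pos (by omega)]
      have := (hpat (n/3)).2.2
      rw [show 3 * (n/3) + 2 = n by omega] at this
      linarith
  have ρv : ∀ n, ρ n = if n % 3 = 2 then 1 + c else 1 := by
    intro n; simp only [hρ, sg, rr]; split_ifs <;> ring
  have ρ0 : ∀ n, 0 < ρ n := by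
    intro n; rw [ρv]; split_ifs <;> linarith
  have ρ1 : ∀ n, ρ n ≤ 1 := by
    intro n; rw [ρv]; split_ifs <;> linarith
  have yrec : ∀ n, y (n+2) - ρ (n+2) = y (n+1) * y n - ρ (n+1) * ρ n := by
    intro n
    have e2 := rr_rec c 0 n
    simp only [add_zero] at e2
    simp only [hy, hρ]
    rw [h n, e2, sgsg n]; ring
  have x0m : ∀ n, n % 3 = 0 → x n = - y n ∧ x (n+1) = - y (n+1) ∧ ρ n = 1 ∧ ρ (n+1) = 1 ∧
      ρ (n+2) = 1 + c ∧ ρ (n+3) = 1 ∧ ρ (n+4) = 1 := by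
    intro n hn
    simp only [ρv]
    simp only [hy, sg]
    refine ⟨?_, ?_, ?_, ?_, ?_, ?_, ?_⟩
    · rw [if_neg (by omega)]; ring
    · rw [if_neg (by omega)]; ring
    · rw [if_neg (by omega)]
    · rw [if_neg (by omega)]
    · rw [if_pos (by omega)]
    · rw [if_neg (by omega)]
    · rw [if_neg (by omega)]
  have nlo : ∀ n, ¬ (y n ≤ ρ n ∧ y (n+1) ≤ ρ (n+1)) := by
    intro n hn
    have key : ∀ k, y (n+k) ≤ ρ (n+k) ∧ y (n+k+1) ≤ ρ (n+k+1) := by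
      intro k
      induction k with
      | zero => exact hn
      | succ k ih =>
        refine ⟨ih.2, ?_⟩
        have r := yrec (n+k)
        have : y (n+k+1) * y (n+k) ≤ ρ (n+k+1) * ρ (n+k) :=
          mul_le_mul ih.2 ih.1 (y0 _) (ρ0 _).le
        rw [show n + (k+1) + 1 = n+k+2 by ring]
        linarith
    obtain ⟨k, hk⟩ : ∃ k, (n+k) % 3 = 0 := ⟨2*n, by omega⟩
    obtain ⟨e1, e2, e3, e4, -⟩ := x0m _ hk
    obtain ⟨k1, k2⟩ := key k
    have p1 := y0 (n+k)
    have p2 := y0 (n+k+1)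
    exact hS (n+k) ⟨by linarith, by linarith, by linarith, by linarith⟩
  have nhi : ∀ n, ¬ (ρ n ≤ y n ∧ ρ (n+1) ≤ y (n+1)) := by
    intro n hn
    have key : ∀ k, ρ (n+k) ≤ y (n+k) ∧ ρ (n+k+1) ≤ y (n+k+1) := by
      intro k
      induction k with
      | zero => exact hn
      | succ k ih =>
        refine ⟨ih.2, ?_⟩
        have r := yrec (n+k)
        have : ρ (n+k+1) * ρ (n+k) ≤ y (n+k+1) * y (n+k) :=
          mul_le_mul ih.2 ih.1 (ρ0 _).le (y0 _)
        rw [show n + (k+1) + 1 = n+k+2 by ring]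
        linarith
    obtain ⟨k, hk⟩ : ∃ k, (n+k) % 3 = 0 := ⟨2*n, by omega⟩
    refine no_grow (a := 2) (B := 2 * B)
      (s := fun j => (y (n+k+3*j) - 1) + (y (n+k+3*j+1) - 1)) (by norm_num) ?_ ?_ ?_
    · obtain ⟨e1, e2, e3, e4, -⟩ := x0m _ hk
      obtain ⟨k1, k2⟩ := key k
      by_contra! hh
      simp only [mul_zero, add_zero] at hh
      exact hS (n+k) ⟨by linarith, by linarith, by linarith, by linarith⟩
    · intro j
      obtain ⟨-, -, e1, e2, e3, e4, e5⟩ := x0m (n+k+3*j) (by omega)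
      have q0 := (key (k+3*j)).1
      have q1 := (key (k+3*j)).2
      have q2 := (key (k+3*j+1)).2
      have q3 := (key (k+3*j+2)).2
      have r0 := yrec (n+k+3*j)
      have r1 := yrec (n+k+3*j+1)
      have r2 := yrec (n+k+3*j+2)
      simp only [← add_assoc] at q0 q1 q2 q3
      rw [show n+k+3*(j+1) = n+k+3*j+3 by ring]
      generalize n+k+3*j = w at *
      simp only [add_assoc, Nat.reduceAdd] at q0 q1 q2 q3 r0 r1 r2 e1 e2 e3 e4 e5 ⊢
      rw [e1] at q0 r0
      rw [e2] at q1 r0 r1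
      rw [e3] at q2 r0 r1 r2
      rw [e4] at q3 r1 r2
      rw [e5] at r2
      generalize y w = U at *
      generalize y (w+1) = V at *
      generalize y (w+2) = P at *
      generalize y (w+3) = U' at *
      generalize y (w+4) = V' at *
      have d1 : 0 ≤ (U - 1) * (V - 1) := mul_nonneg (by linarith) (by linarith)
      have d2 : 0 ≤ P * (V - 1) := mul_nonneg (by linarith) (by linarith)
      have d3 : 0 ≤ P * (U' - 1) := mul_nonneg (by linarith) (by linarith)
      linarith
    · intro j
      have : ∀ n, y n ≤ B := by
        intro n
        refine (le_abs_self _).trans ?_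
        simp only [hy]
        rw [abs_mul, sgabs, one_mul]; exact hB n
      linarith [this (n+k+3*j), this (n+k+3*j+1)]
  have E : ∀ n, |y (n+2) - ρ (n+2)| ≤ ρ (n+1) * |y n - ρ n| := by
    intro n
    have r := yrec n
    have p0 := y0 n
    have p1 := ρ0 (n+1)
    rcases le_total (y n) (ρ n) with g | g
    · have g1 : ρ (n+1) < y (n+1) := by
        by_contra! hh; exact nlo n ⟨g, hh⟩
      have g2 : y (n+2) < ρ (n+2) := by
        by_contra! hh; exact nhi (n+1) ⟨g1.le, hh⟩
      rw [abs_of_neg (by linarith), abs_of_nonpos (by linarith)]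
      nlinarith
    · have g1 : y (n+1) < ρ (n+1) := by
        by_contra! hh; exact nhi n ⟨g, hh⟩
      have g2 : ρ (n+2) < y (n+2) := by
        by_contra! hh; exact nlo (n+1) ⟨g1.le, hh⟩
      rw [abs_of_pos (by linarith), abs_of_nonneg (by linarith)]
      nlinarith
  have E6 : ∀ n, |y (n+6) - ρ (n+6)| ≤ (1 + c) * |y n - ρ n| := by
    intro n
    have e1 := E n
    have e2 := E (n+2)
    have e3 := E (n+4)
    have hprod : ρ (n+5) * (ρ (n+3) * ρ (n+1)) = 1 + c := by
      simp only [ρv]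
      have : n % 3 = 0 ∨ n % 3 = 1 ∨ n % 3 = 2 := by omega
      rcases this with g | g | g
      · rw [if_pos (by omega), if_neg (by omega), if_neg (by omega)]; ring
      · rw [if_neg (by omega), if_neg (by omega), if_pos (by omega)]; ring
      · rw [if_neg (by omega), if_pos (by omega), if_neg (by omega)]; ring
    calc |y (n+6) - ρ (n+6)| ≤ ρ (n+5) * |y (n+4) - ρ (n+4)| := e3
      _ ≤ ρ (n+5) * (ρ (n+3) * |y (n+2) - ρ (n+2)|) := by
        have := (ρ0 (n+5)).le
        gcongr
      _ ≤ ρ (n+5) * (ρ (n+3) * (ρ (n+1) * |y n - ρ n|)) := by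
        have := (ρ0 (n+5)).le
        have := (ρ0 (n+3)).le
        gcongr
      _ = (ρ (n+5) * (ρ (n+3) * ρ (n+1))) * |y n - ρ n| := by ring
      _ = _ := by rw [hprod]
  have T := geo (e := fun n => |y n - ρ n|) (q := 1 + c) 6 (by norm_num) (by linarith) (by linarith) (fun n => abs_nonneg _) E6
  refine Or.inr (Or.inr ⟨0, ?_⟩)
  rw [tendsto_zero_iff_abs_tendsto_zero]
  refine T.congr (fun n => ?_)
  simp only [hy, hρ, Function.comp, add_zero]
  rw [← mul_sub, abs_mul, sgabs, one_mul]

theorem main_conv {x : ℕ → ℝ} {c B : ℝ} (hc1 : -1 < c) (hc2 : c < 0) (h : RecS c x)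
    (hB : ∀ n, |x n| ≤ B) : GoodS c x := by
  by_cases hS : ∃ n, (-1 ≤ x n ∧ x n ≤ 1 + c ∧ -1 ≤ x (n+1) ∧ x (n+1) ≤ 1 + c)
  · obtain ⟨n, i1, i2, i3, i4⟩ := hS
    refine GoodS.unshift n (S_conv hc1 hc2 (h.shift n) ?_ ?_ ?_ ?_) <;>
      simp only [zero_add, add_comm 1 n] <;> assumption
  by_cases hp : ∀ n, 0 ≤ x n
  · exact pos_conv hc1 hc2 h (fun n => (le_abs_self _).trans (hB n)) hp
  push Not at hp
  obtain ⟨n0, hn0⟩ := hp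
  have hS' : ∀ n, ¬ (-1 ≤ x n ∧ x n ≤ 1 + c ∧ -1 ≤ x (n+1) ∧ x (n+1) ≤ 1 + c) := by
    intro n hn; exact hS ⟨n, hn⟩
  obtain ⟨n1, i1, i2⟩ : ∃ n, x n < 0 ∧ 0 ≤ x (n+1) := by
    by_contra! hh
    have neg : ∀ k, x (n0 + k) < 0 := by
      intro k
      induction k with
      | zero => exact hn0
      | succ k ih => exact hh _ ih
    have q0 := neg 0
    have q1 := neg 1
    have q2 := neg 2
    have q3 := neg 3
    have r2 := h n0
    have r3 := h (n0+1)
    rw [show n0+1+2 = n0+3 by ring, show n0+1+1=n0+2 by ring] at r3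
    simp only [add_zero] at q0
    exact hS' (n0+2) ⟨by nlinarith, by linarith, by rw [show n0+2+1 = n0+3 by ring]; nlinarith,
      by rw [show n0+2+1 = n0+3 by ring]; linarith⟩
  have pat : ∀ j, x (n1 + 3*j) < 0 ∧ 0 ≤ x (n1 + 3*j+1) := by
    intro j
    induction j with
    | zero => exact ⟨i1, i2⟩
    | succ j ih =>
      obtain ⟨i1, i2⟩ := ih
      rw [show n1 + 3*(j+1) = n1 + 3*j + 3 by ring]
      have s := hS' (n1+3*j+2)
      generalize n1 + 3*j = w at *
      have r2 := h w
      have r3 := h (w+1)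
      have r4 := h (w+2)
      simp only [add_assoc, Nat.reduceAdd] at *
      have x2 : x (w+2) ≤ c := by nlinarith
      have x3 : x (w+3) ≤ c := by nlinarith
      refine ⟨by linarith, ?_⟩
      by_contra! hh
      refine s ⟨?_, by linarith, ?_, by linarith⟩
      · by_contra! h1; nlinarith
      · by_contra! h1; nlinarith
  refine GoodS.unshift (n1+2) (cyc_conv hc1 hc2 (h.shift (n1+2)) (fun _ => hB _) ?_ ?_)
  · intro n
    have := hS' (n + (n1+2))
    rwa [show n + 1 + (n1+2) = n + (n1+2) + 1 by ring]
  · intro j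
    obtain ⟨p1, p2⟩ := pat j
    obtain ⟨p3, p4⟩ := pat (j+1)
    have r2 := h (n1+3*j)
    rw [show 3*j+(n1+2) = n1+3*j+2 by ring, show 3*j+1+(n1+2) = n1+3*(j+1) by ring,
      show 3*j+2+(n1+2) = n1+3*(j+1)+1 by ring]
    exact ⟨by nlinarith, p3, p4⟩

theorem iter_eq {c : ℝ} {x : ℕ → ℝ} (h : RecS c x) (n : ℕ) :
    (fc c)^[n] (x 1, x 0) = (x (n+1), x n) := by
  induction n with
  | zero => rfl
  | succ n ih =>
    rw [Function.iterate_succ_apply', ih]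
    simp only [fc]
    rw [← h n]

theorem exists_seq (c : ℝ) (z : ℝ × ℝ) : ∃ x : ℕ → ℝ, RecS c x ∧
    ∀ n, (fc c)^[n] z = (x (n+1), x n) := by
  have h1 : ∀ n, ((fc c)^[n+1] z).2 = ((fc c)^[n] z).1 := by
    intro n; rw [Function.iterate_succ_apply']; rfl
  refine ⟨fun n => ((fc c)^[n] z).2, fun n => ?_, fun n => ?_⟩
  · simp only
    rw [h1 (n+1), h1 n, Function.iterate_succ_apply']; rfl
  · simp only
    rw [h1 n]

theorem cyc_iter (c : ℝ) (i n : ℕ) :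
    (fc c)^[n] (rr c (1+i), rr c (0+i)) = (rr c (n+1+i), rr c (n+i)) :=
  iter_eq (rr_rec c i) n

theorem cyc_back {c : ℝ} {z w : ℝ × ℝ} {i : ℕ} (hw : w = (rr c (1+i), rr c (0+i)))
    (h : Tendsto (fun n => ‖(fc c)^[n] z - (fc c)^[n] w‖) atTop (𝓝 0)) :
    ∃ M : ℝ, ∀ n : ℕ, ‖(fc c)^[n] z‖ ≤ M := by
  obtain ⟨M, hM⟩ := h.bddAbove_range
  have hr : ∀ n, |rr c n| ≤ |1 + c| + 1 := by
    intro n; unfold rr; split_ifs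
    · linarith
    · simp
  refine ⟨M + (|1 + c| + 1), fun n => ?_⟩
  have h1 : ‖(fc c)^[n] z - (fc c)^[n] w‖ ≤ M := hM ⟨n, rfl⟩
  have h2 : ‖(fc c)^[n] w‖ ≤ |1 + c| + 1 := by
    rw [hw, cyc_iter, Prod.norm_def]
    exact max_le (hr _) (hr _)
  calc ‖(fc c)^[n] z‖ = ‖((fc c)^[n] z - (fc c)^[n] w) + (fc c)^[n] w‖ := by simp
    _ ≤ _ := norm_add_le _ _
    _ ≤ _ := add_le_add h1 h2

theorem cyc_fwd {c : ℝ} {z w : ℝ × ℝ} {i : ℕ} (hw : w = (rr c (1+i), rr c (0+i))) {x : ℕ → ℝ}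
    (hx : ∀ n, (fc c)^[n] z = (x (n+1), x n))
    (h : Tendsto (fun n => x n - rr c (n + i)) atTop (𝓝 0)) :
    Tendsto (fun n => ‖(fc c)^[n] z - (fc c)^[n] w‖) atTop (𝓝 0) := by
  rw [← tendsto_zero_iff_norm_tendsto_zero]
  have h' := (tendsto_add_atTop_iff_nat 1).2 h
  have := h'.prodMk_nhds h
  refine this.congr (fun n => ?_)
  rw [hx, hw, cyc_iter]; rfl

theorem stmt0 (c : ℝ) (hc1 : -1 < c) (hc2 : c < 0) :
    {z : ℝ × ℝ | ∃ M : ℝ, ∀ n : ℕ, ‖(fc c)^[n] z‖ ≤ M} =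
      {z : ℝ × ℝ | Tendsto (fun n => (fc c)^[n] z) atTop (𝓝 (a1 c, a1 c))} ∪
      {z : ℝ × ℝ | Tendsto (fun n => (fc c)^[n] z) atTop (𝓝 (a2 c, a2 c))} ∪
      {z : ℝ × ℝ | Tendsto (fun n => ‖(fc c)^[n] z - (fc c)^[n] (-1, -1)‖) atTop (𝓝 0)} ∪
      {z : ℝ × ℝ | Tendsto (fun n => ‖(fc c)^[n] z - (fc c)^[n] (1 + c, -1)‖) atTop (𝓝 0)} ∪
      {z : ℝ × ℝ | Tendsto (fun n => ‖(fc c)^[n] z - (fc c)^[n] (-1, 1 + c)‖) atTop (𝓝 0)} := by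
  have w0 : ((-1, -1) : ℝ × ℝ) = (rr c (1+0), rr c (0+0)) := by simp [rr]
  have w1 : ((1+c, -1) : ℝ × ℝ) = (rr c (1+1), rr c (0+1)) := by simp [rr]
  have w2 : ((-1, 1+c) : ℝ × ℝ) = (rr c (1+2), rr c (0+2)) := by simp [rr]
  have conv_bdd : ∀ (z l : ℝ × ℝ), Tendsto (fun n => (fc c)^[n] z) atTop (𝓝 l) →
      ∃ M : ℝ, ∀ n : ℕ, ‖(fc c)^[n] z‖ ≤ M := by
    intro z l hl
    obtain ⟨M, hM⟩ := hl.norm.bddAbove_range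
    exact ⟨M, fun n => hM ⟨n, rfl⟩⟩
  ext z
  simp only [mem_setOf_eq, mem_union]
  constructor
  · rintro ⟨M, hM⟩
    obtain ⟨x, hr, hx⟩ := exists_seq c z
    have hB : ∀ n, |x n| ≤ M := by
      intro n
      have := hM n
      rw [hx, Prod.norm_def] at this
      exact (le_max_right _ _).trans this
    have fix : ∀ l : ℝ, Tendsto x atTop (𝓝 l) →
        Tendsto (fun n => (fc c)^[n] z) atTop (𝓝 (l, l)) := by
      intro l hl
      have h' := (tendsto_add_atTop_iff_nat 1).2 hl
      refine (h'.prodMk_nhds hl).congr (fun n => (hx n).symm)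
    rcases main_conv hc1 hc2 hr hB with g | g | ⟨i, g⟩
    · exact Or.inl (Or.inl (Or.inl (Or.inl (fix _ g))))
    · exact Or.inl (Or.inl (Or.inl (Or.inr (fix _ g))))
    · have hi : ∀ j, i % 3 = j % 3 → Tendsto (fun n => x n - rr c (n + j)) atTop (𝓝 0) := by
        intro j hj
        refine g.congr (fun n => ?_)
        unfold rr
        rw [show (n + i) % 3 = (n + j) % 3 by omega]
      have : i % 3 = 0 ∨ i % 3 = 1 ∨ i % 3 = 2 := by omega
      rcases this with k | k | k
      · exact Or.inl (Or.inl (Or.inr (cyc_fwd w0 hx (hi 0 k))))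
      · exact Or.inl (Or.inr (cyc_fwd w1 hx (hi 1 k)))
      · exact Or.inr (cyc_fwd w2 hx (hi 2 k))
  · rintro ((((g | g) | g) | g) | g)
    · exact conv_bdd _ _ g
    · exact conv_bdd _ _ g
    · exact cyc_back w0 g
    · exact cyc_back w1 g
    · exact cyc_back w2 g
end

section
/- Let c ∈ ℝ with -1 < c < 0. Then f(L) ⊆ L, f(M) ⊆ N, f(N) ⊆ P and f(P) ⊆ M. -/
open Set Filter Topology

theorem stmt1 (c : ℝ) (hc1 : -1 < c) (hc2 : c < 0) :
    fc c '' (Ici (a2 c) ×ˢ Ici (a2 c)) ⊆ Ici (a2 c) ×ˢ Ici (a2 c) ∧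
    fc c '' (Iic (-1 : ℝ) ×ˢ Ici (1 + c)) ⊆ Iic (-1 : ℝ) ×ˢ Iic (-1 : ℝ) ∧
    fc c '' (Iic (-1 : ℝ) ×ˢ Iic (-1 : ℝ)) ⊆ Ici (1 + c) ×ˢ Iic (-1 : ℝ) ∧
    fc c '' (Ici (1 + c) ×ˢ Iic (-1 : ℝ)) ⊆ Iic (-1 : ℝ) ×ˢ Ici (1 + c) := by
  have hs := Real.sq_sqrt (show (0 : ℝ) ≤ 1 - 4 * c by linarith)
  have h0 := Real.sqrt_nonneg (1 - 4 * c)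
  have ha : a2 c * a2 c + c = a2 c := by
    unfold a2
    nlinarith
  have hp : 0 < a2 c := by
    unfold a2
    linarith
  refine ⟨?_, ?_, ?_, ?_⟩ <;> rintro _ ⟨⟨x, y⟩, ⟨hx, hy⟩, rfl⟩ <;>
    simp only [mem_Ici, mem_Iic] at hx hy <;>
    refine ⟨?_, hx⟩ <;> simp only [fc, mem_Ici, mem_Iic]
  · nlinarith [mul_le_mul hx hy hp.le (hp.le.trans hx)]
  · nlinarith [mul_nonneg (sub_nonneg.2 hx) (show 0 ≤ y by linarith)]
  · nlinarith [mul_nonneg (sub_nonneg.2 hx) (sub_nonneg.2 hy)]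
  · nlinarith [mul_nonneg (sub_nonneg.2 hy) (show 0 ≤ x by linarith)]
end

section
/- Let c ∈ ℝ with -1 < c < 0. For every z ∈ S, the sup-norm ‖fⁿ(z)‖∞ diverges to +∞ as n → +∞. -/
open Set Filter Topology

theorem fc_N3 (c : ℝ) (hc1 : -1 < c) (x y t : ℝ) (hx : x ≤ -1) (hy : y ≤ -1)
    (ht : t ≤ -2 - x - y) :
    ∃ x' y' : ℝ, (fc c)^[3] (x, y) = (x', y') ∧ x' ≤ -1 ∧ y' ≤ -1 ∧ 2 * t ≤ -2 - x' - y' := by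
  obtain ⟨u, rfl⟩ : ∃ u, x = -1 - u := ⟨-1 - x, by ring⟩
  obtain ⟨v, rfl⟩ : ∃ v, y = -1 - v := ⟨-1 - y, by ring⟩
  obtain ⟨k, rfl⟩ : ∃ k, c = k - 1 := ⟨c + 1, by ring⟩
  have hu : 0 ≤ u := by linarith
  have hv : 0 ≤ v := by linarith
  have hk : 0 ≤ k := by linarith
  have huv : 0 ≤ u * v := by positivity
  obtain ⟨w, hw⟩ : ∃ w, w = u + v + u * v := ⟨_, rfl⟩
  have hw0 : 0 ≤ w := by rw [hw]; positivity
  obtain ⟨p, hp⟩ : ∃ p, p = u * (k + w) := ⟨_, rfl⟩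
  have hp0 : 0 ≤ p := by rw [hp]; positivity
  have hq : 0 ≤ (w + p) * (k + w) := by positivity
  refine ⟨-1 - (w + (w + p) * (k + w)), -1 - (w + p), ?_, by linarith, by linarith, by linarith⟩
  simp only [Function.iterate_succ, Function.iterate_zero, Function.comp, id, fc, Prod.mk.injEq]
  subst hp
  subst hw
  constructor <;> ring

theorem fc_Niter (c : ℝ) (hc1 : -1 < c) (n : ℕ) : ∀ (x y t : ℝ), x ≤ -1 → y ≤ -1 →
    t ≤ -2 - x - y →
    ∃ x' y' : ℝ, (fc c)^[3 * n] (x, y) = (x', y') ∧ x' ≤ -1 ∧ y' ≤ -1 ∧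
      2 ^ n * t ≤ -2 - x' - y' := by
  induction n with
  | zero => intro x y t hx hy ht; exact ⟨x, y, rfl, hx, hy, by simpa using ht⟩
  | succ n ih =>
    intro x y t hx hy ht
    obtain ⟨x1, y1, h1, hx1, hy1, ht1⟩ := fc_N3 c hc1 x y t hx hy ht
    obtain ⟨x2, y2, h2, hx2, hy2, ht2⟩ := ih x1 y1 _ hx1 hy1 ht1
    refine ⟨x2, y2, ?_, hx2, hy2, ?_⟩
    · rw [show 3 * (n + 1) = 3 * n + 3 by ring, Function.iterate_add_apply, h1, h2]
    · rw [pow_succ]; linarith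

theorem fc_Nbound (c : ℝ) (hc1 : -1 < c) (x y t : ℝ) (hx : x ≤ -1) (hy : y ≤ -1)
    (ht : t ≤ -2 - x - y) (r : ℕ) (hr : r < 3) :
    t / 2 ≤ max |((fc c)^[r] (x, y)).1| |((fc c)^[r] (x, y)).2| := by
  obtain ⟨u, rfl⟩ : ∃ u, x = -1 - u := ⟨-1 - x, by ring⟩
  obtain ⟨v, rfl⟩ : ∃ v, y = -1 - v := ⟨-1 - y, by ring⟩
  obtain ⟨k, rfl⟩ : ∃ k, c = k - 1 := ⟨c + 1, by ring⟩
  have hu : 0 ≤ u := by linarith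
  have hv : 0 ≤ v := by linarith
  have hk : 0 ≤ k := by linarith
  have huv : 0 ≤ u * v := by positivity
  have h3 : 0 ≤ u * (k + u + v + u * v) := by positivity
  interval_cases r
  · simp only [Function.iterate_zero, id]
    have h1 := le_max_left |-1 - u| |-1 - v|
    have h2 := le_max_right |-1 - u| |-1 - v|
    have h4 := neg_le_abs (-1 - u)
    have h5 := neg_le_abs (-1 - v)
    linarith
  · refine le_trans ?_ (le_max_left _ _)
    refine le_trans ?_ (le_abs_self _)
    simp only [Function.iterate_succ, Function.iterate_zero, Function.comp, id, fc]
    nlinarith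
  · refine le_trans ?_ (le_max_left _ _)
    refine le_trans ?_ (neg_le_abs _)
    simp only [Function.iterate_succ, Function.iterate_zero, Function.comp, id, fc]
    nlinarith

theorem fc_Ntend (c : ℝ) (hc1 : -1 < c) (x y : ℝ) (hx : x ≤ -1) (hy : y ≤ -1)
    (ht : 0 < -2 - x - y) :
    Tendsto (fun n => max |((fc c)^[n] (x, y)).1| |((fc c)^[n] (x, y)).2|) atTop atTop := by
  have hT : Tendsto (fun n : ℕ => (2 : ℝ) ^ (n / 3) * ((-2 - x - y) / 2)) atTop atTop := by
    refine Tendsto.atTop_mul_const (by linarith) ?_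
    exact (tendsto_pow_atTop_atTop_of_one_lt (by norm_num : (1 : ℝ) < 2)).comp
      (Nat.tendsto_div_const_atTop (by norm_num))
  refine tendsto_atTop_mono (fun n => ?_) hT
  obtain ⟨x1, y1, h1, hx1, hy1, ht1⟩ := fc_Niter c hc1 (n / 3) x y _ hx hy le_rfl
  have := fc_Nbound c hc1 x1 y1 _ hx1 hy1 ht1 (n % 3) (Nat.mod_lt _ (by norm_num))
  rw [← h1, ← Function.iterate_add_apply, Nat.mod_add_div] at this
  linarith

theorem fc_shift (c : ℝ) (z : ℝ × ℝ)
    (h : Tendsto (fun n => max |((fc c)^[n] (fc c z)).1| |((fc c)^[n] (fc c z)).2|) atTop atTop) :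
    Tendsto (fun n => max |((fc c)^[n] z).1| |((fc c)^[n] z).2|) atTop atTop := by
  rw [← tendsto_add_atTop_iff_nat 1]
  simpa only [Function.iterate_succ_apply] using h

theorem fc_Mtend (c : ℝ) (hc1 : -1 < c) (x y : ℝ) (hx : x ≤ -1) (hy : 1 + c ≤ y)
    (ht : ¬ (x = -1 ∧ y = 1 + c)) :
    Tendsto (fun n => max |((fc c)^[n] (x, y)).1| |((fc c)^[n] (x, y)).2|) atTop atTop := by
  apply fc_shift
  have h1 : 0 ≤ (-1 - x) * y := mul_nonneg (by linarith) (by linarith)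
  apply fc_Ntend c hc1
  · simp only; nlinarith
  · exact hx
  · simp only
    by_contra hcon
    exact ht ⟨by nlinarith, by nlinarith⟩

theorem fc_Ptend (c : ℝ) (hc1 : -1 < c) (x y : ℝ) (hx : 1 + c ≤ x) (hy : y ≤ -1)
    (ht : ¬ (x = 1 + c ∧ y = -1)) :
    Tendsto (fun n => max |((fc c)^[n] (x, y)).1| |((fc c)^[n] (x, y)).2|) atTop atTop := by
  apply fc_shift
  have h1 : 0 ≤ (-1 - y) * x := mul_nonneg (by linarith) (by linarith)
  apply fc_Mtend c hc1
  · simp only; nlinarith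
  · exact hx
  · rintro ⟨h2, h3⟩
    simp only at h2 h3
    refine ht ⟨h3, ?_⟩
    have h4 : (-1 - y) * x = 0 := by rw [h3] at h2 ⊢; linarith
    rcases mul_eq_zero.1 h4 with h | h <;> linarith

theorem fc_Liter (c a : ℝ) (ha : 1 < a) (hac : a * a + c = a) (n : ℕ) : ∀ (x y : ℝ), a ≤ x →
    a ≤ y → ∃ x' y' : ℝ, (fc c)^[n] (x, y) = (x', y') ∧ a ≤ x' ∧ a ≤ y' ∧
      a ^ n * (x + y - 2 * a) ≤ x' + y' - 2 * a := by
  induction n with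
  | zero => intro x y hx hy; exact ⟨x, y, rfl, hx, hy, by simp⟩
  | succ n ih =>
    intro x y hx hy
    have h0 : 0 ≤ (x - a) * (y - a) := mul_nonneg (by linarith) (by linarith)
    have h1 : 0 ≤ a * (x - a) := mul_nonneg (by linarith) (by linarith)
    have h2 : 0 ≤ a * (y - a) := mul_nonneg (by linarith) (by linarith)
    obtain ⟨x2, y2, h2, hx2, hy2, ht2⟩ := ih (x * y + c) x (by nlinarith) hx
    refine ⟨x2, y2, ?_, hx2, hy2, le_trans ?_ ht2⟩
    · rw [Function.iterate_succ_apply]; exact h2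
    · rw [pow_succ, mul_assoc]
      exact mul_le_mul_of_nonneg_left (by nlinarith) (by positivity)

theorem fc_Ltend (c a : ℝ) (ha : 1 < a) (hac : a * a + c = a) (x y : ℝ) (hx : a ≤ x)
    (hy : a ≤ y) (ht : 0 < x + y - 2 * a) :
    Tendsto (fun n => max |((fc c)^[n] (x, y)).1| |((fc c)^[n] (x, y)).2|) atTop atTop := by
  have hT : Tendsto (fun n : ℕ => a ^ n * ((x + y - 2 * a) / 2)) atTop atTop :=
    Tendsto.atTop_mul_const (by linarith) (tendsto_pow_atTop_atTop_of_one_lt ha)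
  refine tendsto_atTop_mono (fun n => ?_) hT
  obtain ⟨x1, y1, h1, hx1, hy1, ht1⟩ := fc_Liter c a ha hac n x y hx hy
  rw [h1]
  have h1 := le_max_left |x1| |y1|
  have h2 := le_max_right |x1| |y1|
  have h4 := le_abs_self x1
  have h5 := le_abs_self y1
  simp only
  linarith

theorem stmt2 (c : ℝ) (hc1 : -1 < c) (hc2 : c < 0) (z : ℝ × ℝ)
    (hz : z ∈ (Ici (a2 c) ×ˢ Ici (a2 c) ∪ Iic (-1 : ℝ) ×ˢ Ici (1 + c) ∪
          Iic (-1 : ℝ) ×ˢ Iic (-1 : ℝ) ∪ Ici (1 + c) ×ˢ Iic (-1 : ℝ)) \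
        {((a2 c, a2 c) : ℝ × ℝ), (-1, -1), (1 + c, -1), (-1, 1 + c)}) :
    Tendsto (fun n => max |((fc c)^[n] z).1| |((fc c)^[n] z).2|) atTop atTop := by
  obtain ⟨x, y⟩ := z
  simp only [mem_diff, mem_union, mem_prod, mem_Ici, mem_Iic, mem_insert_iff, mem_singleton_iff,
    Prod.mk.injEq, not_or] at hz
  obtain ⟨h, n1, n2, n3, n4⟩ := hz
  rcases h with ((⟨hx, hy⟩ | ⟨hx, hy⟩) | ⟨hx, hy⟩) | ⟨hx, hy⟩
  · have hs : Real.sqrt (1 - 4 * c) * Real.sqrt (1 - 4 * c) = 1 - 4 * c :=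
      Real.mul_self_sqrt (by linarith)
    have hs1 : 1 < Real.sqrt (1 - 4 * c) := by
      rw [Real.lt_sqrt (by norm_num)]; linarith
    refine fc_Ltend c (a2 c) (by unfold a2; linarith) (by unfold a2; nlinarith) x y hx hy ?_
    by_contra hcon
    exact n1 ⟨by linarith, by linarith⟩
  · exact fc_Mtend c hc1 x y hx hy n4
  · refine fc_Ntend c hc1 x y hx hy ?_
    by_contra hcon
    exact n2 ⟨by linarith, by linarith⟩
  · exact fc_Ptend c hc1 x y hx hy n3
end

section
/- Let c ∈ ℝ with -1 < c < 0. If z ∈ 𝓡 \ {p, f(p), f²(p)}, then fⁿ(z) → (a₁,a₁) = α as n → +∞. -/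
open Set Filter Topology

set_option maxHeartbeats 2000000 in
theorem alg_key (c : ℝ) (hc1 : -1 < c) (hc2 : c < 0) (m N : ℝ) (hm : -1 < m) (hmN : m ≤ N)
    (hN : N ≤ 1 + c)
    (u v w : ℝ) (hu : m ≤ u ∧ u ≤ N) (hv : m ≤ v ∧ v ≤ N) (hw : m ≤ w ∧ w ≤ N)
    (h1 : m = u * v + c) (h2 : u = v * w + c)
    (u' v' w' : ℝ) (hu' : m ≤ u' ∧ u' ≤ N) (hv' : m ≤ v' ∧ v' ≤ N) (hw' : m ≤ w' ∧ w' ≤ N)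
    (h1' : N = u' * v' + c) (h2' : u' = v' * w' + c) : m = N ∧ m < 0 := by
  obtain ⟨hu1, hu2⟩ := hu
  obtain ⟨hv1, hv2⟩ := hv
  obtain ⟨hw1, hw2⟩ := hw
  obtain ⟨hu1', hu2'⟩ := hu'
  obtain ⟨hv1', hv2'⟩ := hv'
  obtain ⟨hw1', hw2'⟩ := hw'
  have hm0 : m < 0 := by
    by_contra h
    push Not at h
    have : u' * v' ≤ N * N := mul_le_mul hu2' hv2' (by linarith) (by linarith)
    nlinarith
  refine ⟨?_, hm0⟩
  have hA : N ≤ m ^ 2 + c := by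
    by_contra h
    push Not at h
    have h3 : m ^ 2 < u' * v' := by linarith
    rcases le_total 0 u' with h0 | h0
    · have hv0 : 0 ≤ v' := by
        by_contra h4
        push Not at h4
        linarith [mul_nonpos_of_nonneg_of_nonpos h0 h4.le, sq_nonneg m]
      have : u' * v' ≤ N * N := mul_le_mul hu2' hv2' hv0 (by linarith)
      have hNn : 0 ≤ N := h0.trans hu2'
      have := mul_le_mul_of_nonneg_left (by linarith : N ≤ 1) hNn
      linarith
    · have hv0 : v' ≤ 0 := by
        by_contra h4
        push Not at h4
        linarith [mul_nonpos_of_nonpos_of_nonneg h0 h4.le, sq_nonneg m]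
      nlinarith [mul_nonneg (sub_nonneg.2 hu1') (neg_nonneg.2 hv0), mul_nonneg (sub_nonneg.2 hv1') (neg_nonneg.2 hm0.le)]
  -- if `m^2 - m + c ≤ 0` we are done
  have hB : m * (m ^ 2 + c) + c ≤ m → m = N := by
    intro h
    have h5 : (1 + m) * (m ^ 2 - m + c) ≤ 0 := by nlinarith
    have h6 : m ^ 2 - m + c ≤ 0 := by
      by_contra h7
      push Not at h7
      nlinarith [mul_pos (by linarith : (0:ℝ) < 1 + m) h7]
    linarith
  rcases le_or_gt 0 N with hN0 | hN0
  · apply hB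
    have h3 : m * N ≤ u * v := by
      rcases le_total 0 u with h0 | h0
      · nlinarith [mul_nonneg h0 (sub_nonneg.2 hv1), mul_nonneg (neg_nonneg.2 hm0.le) (sub_nonneg.2 hu2)]
      · nlinarith [mul_nonneg (neg_nonneg.2 h0) (sub_nonneg.2 hv2), mul_nonneg hN0 (sub_nonneg.2 hu1)]
    nlinarith
  · -- everything negative
    by_contra hne
    have hlt : m < N := lt_of_le_of_ne hmN hne
    have hB' : m < m * (m ^ 2 + c) + c := by
      by_contra h
      push Not at h
      exact hne (hB h)
    -- m = v^2 w + c v + c ≥ v^2 m + c v + c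
    have h3 : v ^ 2 * m + c * v + c ≤ m := by
      have : m = v ^ 2 * w + c * v + c := by rw [h1, h2]; ring
      nlinarith [mul_nonneg (sq_nonneg v) (sub_nonneg.2 hw1)]
    have h4 : N ^ 2 * m + c * N + c ≤ m := by
      by_contra h
      push Not at h
      -- concave in v
      have hg : ∀ t, (t - m) * (N - t) * m ≤ 0 ∨ True := fun _ => Or.inr trivial
      have e : (N - m) * (v ^ 2 * m + c * v + c - m) =
          (N - v) * (m ^ 2 * m + c * m + c - m) + (v - m) * (N ^ 2 * m + c * N + c - m)
          - m * (N - v) * (v - m) * (N - m) := by ring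
      have e1 : 0 ≤ (N - v) * (m ^ 2 * m + c * m + c - m) :=
        mul_nonneg (by linarith) (by nlinarith)
      have e2 : 0 ≤ (v - m) * (N ^ 2 * m + c * N + c - m) :=
        mul_nonneg (by linarith) (by linarith)
      have e3 : 0 ≤ (-m) * (N - v) * (v - m) * (N - m) :=
        mul_nonneg (mul_nonneg (mul_nonneg (by linarith) (by linarith)) (by linarith)) (by linarith)
      have e4 : (N - m) * (v ^ 2 * m + c * v + c - m) ≤ 0 :=
        mul_nonpos_of_nonneg_of_nonpos (by linarith) (by linarith)
      have e5 : (N - v) * (m ^ 2 * m + c * m + c - m) = 0 := by linarith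
      have e6 : (v - m) * (N ^ 2 * m + c * N + c - m) = 0 := by linarith
      rcases mul_eq_zero.1 e5 with h8 | h8
      · rcases mul_eq_zero.1 e6 with h9 | h9 <;> linarith
      · nlinarith
    -- (1+N) ((1 - N) m - c)... : m (1-N) ≥ c
    have h5 : c ≤ m * (1 - N) := by
      have : (1 + N) * (m * (1 - N) - c) ≥ 0 := by nlinarith
      have := nonneg_of_mul_nonneg_right this (by linarith)
      linarith
    -- N ≤ v'^2 N + c v' + c
    have h6 : N ≤ v' ^ 2 * N + c * v' + c := by
      have : N = v' ^ 2 * w' + c * v' + c := by rw [h1', h2']; ring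
      nlinarith [mul_nonneg (sq_nonneg v') (sub_nonneg.2 hw2')]
    rcases le_or_gt (2 * N * m) (-c) with h7 | h7
    · -- value at v' bounded by the value at m
      have h8 : v' ^ 2 * N + c * v' + c ≤ m ^ 2 * N + c * m + c := by
        have : (v' - m) * (N * (v' + m) + c) ≤ 0 := by
          apply mul_nonpos_of_nonneg_of_nonpos (by linarith)
          nlinarith
        nlinarith
      have h9 : N * (1 - m) ≤ c := by
        have : (1 + m) * (c - N * (1 - m)) ≥ 0 := by nlinarith
        have := nonneg_of_mul_nonneg_right this (by linarith)
        linarith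
      nlinarith
    · nlinarith

theorem seq_key (c : ℝ) (hc1 : -1 < c) (hc2 : c < 0) (x : ℕ → ℝ)
    (hx : ∀ n, x (n + 2) = x (n + 1) * x n + c) (A : ℝ) (hA : -1 < A)
    (hb : ∀ n, x n ∈ Icc A (1 + c)) : Tendsto x atTop (𝓝 (a1 c)) := by
  set S : Set ℝ := {L | MapClusterPt L atTop x} with hS
  have hpred : ∀ L ∈ S, ∃ u ∈ S, ∃ v ∈ S, ∃ w ∈ S, L = u * v + c ∧ u = v * w + c := by
    intro L hL
    obtain ⟨U, hU, hL⟩ := mapClusterPt_iff_ultrafilter.1 hL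
    have hk : ∀ k : ℕ, ∃ v ∈ S, Tendsto (fun n => x (n - k)) U (𝓝 v) := by
      intro k
      obtain ⟨v, -, hv⟩ := isCompact_Icc.ultrafilter_le_nhds (U.map (fun n => x (n - k)))
        (tendsto_principal.2 (Eventually.of_forall (fun n => hb (n - k))))
      refine ⟨v, ?_, hv⟩
      refine mapClusterPt_iff_ultrafilter.2 ⟨U.map (fun n => n - k), ?_, ?_⟩
      · exact (tendsto_sub_atTop_nat k).mono_left hU
      · exact hv
    obtain ⟨u, hu, hu'⟩ := hk 1
    obtain ⟨v, hv, hv'⟩ := hk 2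
    obtain ⟨w, hw, hw'⟩ := hk 3
    refine ⟨u, hu, v, hv, w, hw, ?_, ?_⟩
    · refine tendsto_nhds_unique hL (((hu'.mul hv').add_const c).congr' ?_)
      have : ∀ᶠ n in (U : Filter ℕ), 3 ≤ n := hU (eventually_ge_atTop 3)
      filter_upwards [this] with n hn
      obtain ⟨j, rfl⟩ := Nat.exists_eq_add_of_le hn
      have := hx (1 + j)
      rw [show 3 + j - 1 = 1 + j + 1 by omega, show 3 + j - 2 = 1 + j by omega,
        show 3 + j = 1 + j + 2 by omega, this]
    · refine tendsto_nhds_unique hu' (((hv'.mul hw').add_const c).congr' ?_)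
      have : ∀ᶠ n in (U : Filter ℕ), 3 ≤ n := hU (eventually_ge_atTop 3)
      filter_upwards [this] with n hn
      obtain ⟨j, rfl⟩ := Nat.exists_eq_add_of_le hn
      have := hx j
      rw [show 3 + j - 1 = j + 2 by omega, show 3 + j - 2 = j + 1 by omega,
        show 3 + j - 3 = j by omega, this]
  have hSsub : S ⊆ Icc A (1 + c) := by
    intro L hL
    exact isClosed_Icc.mem_of_mapClusterPt hL (Eventually.of_forall hb)
  have hSc : IsCompact S := by
    refine isCompact_Icc.of_isClosed_subset ?_ hSsub
    exact isClosed_setOfPred_clusterPt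
  have hSne : S.Nonempty := by
    obtain ⟨L, -, hL⟩ := isCompact_Icc.exists_mapClusterPt (f := atTop) (u := x) (s := Icc A (1+c))
      (Tendsto.mono_right (tendsto_principal.2 (Eventually.of_forall hb)) le_rfl)
    exact ⟨L, hL⟩
  obtain ⟨m, hmS, hm⟩ := hSc.exists_isLeast hSne
  obtain ⟨N, hNS, hN⟩ := hSc.exists_isGreatest hSne
  have hI : ∀ t ∈ S, m ≤ t ∧ t ≤ N := fun t ht => ⟨hm ht, hN ht⟩
  obtain ⟨u, hu, v, hv, w, hw, e1, e2⟩ := hpred m hmS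
  obtain ⟨u', hu', v', hv', w', hw', e1', e2'⟩ := hpred N hNS
  obtain ⟨hmN, hm0⟩ := alg_key c hc1 hc2 m N (lt_of_lt_of_le hA (hSsub hmS).1) (hm hNS) (hSsub hNS).2
    u v w (hI _ hu) (hI _ hv) (hI _ hw) e1 e2 u' v' w' (hI _ hu') (hI _ hv') (hI _ hw') e1' e2'
  have hall : ∀ t ∈ S, t = m := fun t ht => le_antisymm (hmN ▸ hN ht) (hm ht)
  have hma : m = a1 c := by
    rw [hall u hu, hall v hv] at e1
    have hs : Real.sqrt (1 - 4 * c) = 1 - 2 * m := by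
      rw [show 1 - 4 * c = (1 - 2 * m) ^ 2 by nlinarith]
      exact Real.sqrt_sq (by linarith)
    rw [a1, hs]; ring
  rw [← hma]
  refine isCompact_Icc.tendsto_nhds_of_unique_mapClusterPt (Eventually.of_forall hb) ?_
  intro t _ ht
  exact hall t ht

theorem open_key (c : ℝ) (hc1 : -1 < c) (hc2 : c < 0) (x : ℕ → ℝ)
    (hx : ∀ n, x (n + 2) = x (n + 1) * x n + c) (h0 : x 0 ∈ Ioo (-1) (1 + c))
    (h1 : x 1 ∈ Ioo (-1) (1 + c)) : Tendsto x atTop (𝓝 (a1 c)) := by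
  have hcont : Tendsto (fun M : ℝ => M ^ 2 + c) (𝓝[<] 1) (𝓝 (1 + c)) := by
    have : Continuous (fun M : ℝ => M ^ 2 + c) := by fun_prop
    have := (this.tendsto 1).mono_left (nhdsWithin_le_nhds (s := Iio 1))
    simpa using this
  have hneg : Tendsto (fun M : ℝ => -M) (𝓝[<] 1) (𝓝 (-1)) :=
    (continuous_neg.tendsto 1).mono_left nhdsWithin_le_nhds
  have hlt1 : ∀ᶠ M : ℝ in 𝓝[<] 1, M < 1 := eventually_mem_nhdsWithin
  obtain ⟨M, hM1, e1, e2, e3, e4, e5, e6⟩ := (hlt1.and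
    ((hcont.eventually_const_lt h0.2).and ((hcont.eventually_const_lt h1.2).and
    ((hneg.eventually_lt_const h0.1).and ((hneg.eventually_lt_const h1.1).and
    ((hcont.eventually_const_lt (by linarith : 0 < 1 + c)).and
     (hneg.eventually_lt_const (by norm_num : (-1:ℝ) < 0)))))))).exists
  have hM0 : 0 < M := by linarith
  have hNM : M ^ 2 + c ≤ M := by nlinarith
  have hkey : M * (M ^ 2 + c) - c ≤ M := by
    nlinarith [mul_nonneg (sub_nonneg.2 hM1.le) (by linarith : 0 ≤ M ^ 2 + M + c)]
  have hinv : ∀ n, x n ∈ Icc (-M) (M ^ 2 + c) ∧ x (n + 1) ∈ Icc (-M) (M ^ 2 + c) := by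
    intro n
    induction n with
    | zero => exact ⟨⟨e3.le, e1.le⟩, ⟨e4.le, e2.le⟩⟩
    | succ n ih =>
      obtain ⟨⟨a, b⟩, ⟨a', b'⟩⟩ := ih
      refine ⟨⟨a', b'⟩, ?_⟩
      rw [show n + 1 + 1 = n + 2 by omega, hx n]
      constructor
      · rcases le_total 0 (x n) with h | h
        · nlinarith
        · nlinarith
      · have : |x (n + 1)| * |x n| ≤ M * M :=
          mul_le_mul (abs_le.2 ⟨a', by linarith⟩) (abs_le.2 ⟨a, by linarith⟩) (abs_nonneg _) hM0.le
        rw [← abs_mul] at this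
        nlinarith [le_abs_self (x (n + 1) * x n)]
  refine seq_key c hc1 hc2 x hx (-M) (by linarith) (fun n => ⟨(hinv n).1.1, ?_⟩)
  nlinarith [(hinv n).1.2]

theorem stmt3 (c : ℝ) (hc1 : -1 < c) (hc2 : c < 0) (z : ℝ × ℝ)
    (hz : z ∈ (Icc (-1 : ℝ) 0 ×ˢ Icc (0 : ℝ) (1 + c) ∪ Icc (-1 : ℝ) 0 ×ˢ Icc (-1 : ℝ) 0 ∪
          Icc (0 : ℝ) (1 + c) ×ˢ Icc (-1 : ℝ) 0 ∪ Icc (0 : ℝ) (1 + c) ×ˢ Icc (0 : ℝ) (a2 c)) \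
        {((-1, -1) : ℝ × ℝ), (1 + c, -1), (-1, 1 + c)}) :
    Tendsto (fun n => (fc c)^[n] z) atTop (𝓝 (a1 c, a1 c)) := by
  obtain ⟨x, y⟩ := z
  obtain ⟨hz, hz'⟩ := hz
  simp only [mem_insert_iff, mem_singleton_iff, Prod.mk.injEq, not_or, not_and] at hz'
  obtain ⟨n1, n2, n3⟩ := hz'
  simp only [mem_union, mem_prod, mem_Icc] at hz
  have ha2 : a2 c ^ 2 = a2 c - c := by
    have := Real.sq_sqrt (by linarith : 0 ≤ 1 - 4 * c)
    unfold a2; nlinarith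
  have ha2' : 1 < a2 c := by
    have : 1 < Real.sqrt (1 - 4 * c) := by
      rw [Real.lt_sqrt (by norm_num)]; linarith
    unfold a2; linarith
  have hx : x ∈ Icc (-1) (1 + c) := by
    rcases hz with ((⟨⟨_, _⟩, _, _⟩ | ⟨⟨_, _⟩, _, _⟩) | ⟨⟨_, _⟩, _, _⟩) | ⟨⟨_, _⟩, _, _⟩ <;>
      constructor <;> linarith
  have hx1 : x * y + c ∈ Ioo (-1) (1 + c) := by
    rcases hz with ((⟨⟨p1, p2⟩, q1, q2⟩ | ⟨⟨p1, p2⟩, q1, q2⟩) | ⟨⟨p1, p2⟩, q1, q2⟩) |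
      ⟨⟨p1, p2⟩, q1, q2⟩
    · refine ⟨lt_of_le_of_ne (by nlinarith) ?_, by nlinarith⟩
      intro h
      have hx' : x = -1 := by
        by_contra hne
        have : -1 < x := lt_of_le_of_ne p1 (Ne.symm hne)
        nlinarith
      exact n3 hx' (by subst hx'; linarith)
    · refine ⟨by nlinarith, lt_of_le_of_ne (by nlinarith) ?_⟩
      intro h
      have hx' : x = -1 := by nlinarith
      exact n1 hx' (by subst hx'; linarith)
    · refine ⟨lt_of_le_of_ne (by nlinarith) ?_, by nlinarith⟩
      intro h
      have hy' : y = -1 := by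
        by_contra hne
        have : -1 < y := lt_of_le_of_ne q1 (Ne.symm hne)
        nlinarith
      exact n2 (by subst hy'; linarith) hy'
    · refine ⟨by nlinarith, ?_⟩
      have h3 : (1 + c) * a2 c < 1 := by
        have : c = a2 c - a2 c ^ 2 := by linarith
        have e : (1 + c) * a2 c - 1 = - ((a2 c - 1) ^ 2 * (a2 c + 1)) := by
          rw [show 1 + c = 1 + (a2 c - a2 c ^ 2) by linarith]; ring
        have : 0 < (a2 c - 1) ^ 2 * (a2 c + 1) := by
          have : 0 < a2 c - 1 := by linarith
          positivity
        linarith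
      have : x * y ≤ (1 + c) * a2 c := mul_le_mul p2 q2 q1 (by linarith)
      linarith
  have hx2 : (x * y + c) * x + c ∈ Ioo (-1) (1 + c) := by
    obtain ⟨s1, s2⟩ := hx1
    obtain ⟨p1, p2⟩ := hx
    generalize x * y + c = t at *
    constructor
    · rcases lt_trichotomy x 0 with h | h | h
      · nlinarith
      · subst h; linarith
      · nlinarith
    · rcases le_total x 0 with h | h
      · nlinarith
      · nlinarith
  have hstep : ∀ n, (fc c)^[n + 1] (x, y) = fc c ((fc c)^[n] (x, y)) := fun n =>
    Function.iterate_succ_apply' _ _ _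
  set X : ℕ → ℝ := fun n => ((fc c)^[n + 1] (x, y)).1 with hX
  have hpair : ∀ n, (fc c)^[n + 2] (x, y) = (X (n + 1), X n) := by
    intro n
    refine Prod.ext rfl ?_
    rw [hstep (n + 1)]
    rfl
  have hlim : Tendsto X atTop (𝓝 (a1 c)) := by
    refine open_key c hc1 hc2 X ?_ hx1 hx2
    intro n
    show ((fc c)^[n + 2 + 1] (x, y)).1 = _
    rw [hstep, hpair]
    rfl
  rw [← tendsto_add_atTop_iff_nat 2]
  simp only [hpair]
  exact ((tendsto_add_atTop_iff_nat 1).2 hlim).prodMk_nhds hlim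
end

section
/- Let c ∈ ℝ with -1 < c < 0. Then W^s(θ) = ⋂_{n=0}^{∞} f^{-n}(A ∪ H₂), where f^{-n} denotes the set preimage under the n-th iterate of f; that is, z ∈ W^s(θ) if and only if fⁿ(z) ∈ A ∪ H₂ for all n ≥ 0. -/
open Set Filter Topology

lemma a2_eq (c : ℝ) (hc2 : c < 0) : c = a2 c - a2 c ^ 2 ∧ 1 < a2 c := by
  have h := Real.sq_sqrt (show (0:ℝ) ≤ 1 - 4 * c by linarith)
  have h1 : 1 < Real.sqrt (1 - 4 * c) := by
    rw [Real.lt_sqrt] <;> linarith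
  unfold a2
  constructor
  · nlinarith
  · linarith

lemma seq_lim (a c : ℝ) (ha : 1 < a) (hc : c = a - a ^ 2) (h l : ℕ → ℝ)
    (hh : ∀ k, a ≤ h k) (hl : ∀ k, l k ≤ a)
    (h1 : ∀ k, h (k+1) = h k * l k + c) (l1 : ∀ k, l (k+1) = h (k+1) * l k + c) :
    Tendsto h atTop (𝓝 a) ∧ Tendsto l atTop (𝓝 a) := by
  have anti : Antitone h := by
    apply antitone_nat_of_succ_le
    intro k
    have e1 := h1 k
    have e2 := l1 k
    have b1 := hh k
    have b2 := hl k
    have b3 := hl (k+1)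
    rw [e1]
    by_cases hk : l k ≤ 1
    · nlinarith
    · push Not at hk
      by_contra hcon
      push Not at hcon
      have q1 : h k * (l k - 1) > a * (a - 1) := by nlinarith
      have q2 : (h k * l k + c) * l k ≤ a ^ 2 := by rw [← e1]; nlinarith
      have q3 : h k * l k ^ 2 ≤ a ^ 2 + a * (a-1) * l k := by rw [hc] at q2; nlinarith
      have q4 : h k * (l k - 1) * l k ^ 2 > a * (a - 1) * l k ^ 2 :=
        mul_lt_mul_of_pos_right q1 (by positivity)
      have q5 : h k * l k ^ 2 * (l k - 1) ≤ (a ^ 2 + a * (a-1) * l k) * (l k - 1) :=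
        mul_le_mul_of_nonneg_right q3 (by linarith)
      nlinarith
  have hb : BddBelow (range h) := ⟨a, by rintro _ ⟨k, rfl⟩; exact hh k⟩
  have hH := tendsto_atTop_ciInf anti hb
  set H := ⨅ i, h i
  have haH : a ≤ H := ge_of_tendsto' hH hh
  have hH1 := (tendsto_add_atTop_iff_nat 1).2 hH
  have hL : Tendsto l atTop (𝓝 ((H - c) / H)) := by
    have := (hH1.sub_const c).div hH (by linarith)
    refine this.congr fun k => ?_
    have := hh k
    have : h k ≠ 0 := by linarith
    simp only [Pi.div_apply, h1]
    field_simp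
    ring
  have hL1 := (tendsto_add_atTop_iff_nat 1).2 hL
  have hL2 : Tendsto (fun k => l (k+1)) atTop (𝓝 (H * ((H - c) / H) + c)) := by
    simp only [l1]
    exact (hH1.mul hL).add_const c
  have e := tendsto_nhds_unique hL1 hL2
  have e' : (H - c) / H = H := by
    rw [e]
    have : H ≠ 0 := by linarith
    field_simp
    ring
  rw [e'] at hL
  have : H ≤ a := le_of_tendsto' hL hl
  have : H = a := le_antisymm this haH
  rw [this] at hL hH
  exact ⟨hH, hL⟩

lemma even_odd (u : ℕ → ℝ) (a : ℝ) (h0 : Tendsto (fun k => u (2*k)) atTop (𝓝 a))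
    (h1 : Tendsto (fun k => u (2*k+1)) atTop (𝓝 a)) : Tendsto u atTop (𝓝 a) := by
  rw [Metric.tendsto_atTop] at *
  intro ε hε
  obtain ⟨N, hN⟩ := h0 ε hε
  obtain ⟨M, hM⟩ := h1 ε hε
  refine ⟨2*N+2*M, fun n hn => ?_⟩
  rcases Nat.even_or_odd' n with ⟨k, rfl | rfl⟩
  · exact hN k (by omega)
  · exact hM k (by omega)

lemma fc_succ (c : ℝ) (z : ℝ × ℝ) (n : ℕ) : (fc c)^[n+1] z =
    (((fc c)^[n] z).1 * ((fc c)^[n] z).2 + c, ((fc c)^[n] z).1) := by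
  rw [Function.iterate_succ_apply']; rfl

lemma back (a c : ℝ) (ha : 1 < a) (hc : c = a - a ^ 2) (z : ℝ × ℝ)
    (h : ∀ n, (fc c)^[n] z ∈ Icc (0 : ℝ) a ×ˢ Ici a ∪ Ici a ×ˢ Icc (0 : ℝ) a)
    (h0 : z ∈ Ici a ×ˢ Icc (0 : ℝ) a) :
    Tendsto (fun n => (fc c)^[n] z) atTop (𝓝 (a, a)) := by
  have sA : ∀ n, (fc c)^[n] z ∈ Ici a ×ˢ Icc (0 : ℝ) a →
      (fc c)^[n+1] z ∈ Icc (0 : ℝ) a ×ˢ Ici a := by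
    intro n hn
    have := h (n+1)
    rw [fc_succ] at this ⊢
    simp only [mem_union, mem_prod, mem_Icc, mem_Ici] at this hn ⊢
    rcases this with this | this
    · exact this
    · have e : ((fc c)^[n] z).1 = a := by linarith
      rw [e] at this hn ⊢
      refine ⟨⟨by linarith, ?_⟩, le_rfl⟩
      nlinarith
  have sB : ∀ n, (fc c)^[n] z ∈ Icc (0 : ℝ) a ×ˢ Ici a →
      (fc c)^[n+1] z ∈ Ici a ×ˢ Icc (0 : ℝ) a := by
    intro n hn
    have := h (n+1)
    rw [fc_succ] at this ⊢
    simp only [mem_union, mem_prod, mem_Icc, mem_Ici] at this hn ⊢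
    rcases this with this | this
    · have e : ((fc c)^[n] z).1 = a := by linarith
      rw [e] at this hn ⊢
      refine ⟨?_, by linarith, le_rfl⟩
      nlinarith
    · exact this
  have ev : ∀ k, (fc c)^[2*k] z ∈ Ici a ×ˢ Icc (0 : ℝ) a := by
    intro k
    induction k with
    | zero => simpa using h0
    | succ k ih => exact sB _ (sA _ ih)
  have od := fun k => sA _ (ev k)
  have key := seq_lim a c ha hc (fun k => ((fc c)^[2*k] z).1) (fun k => ((fc c)^[2*k+1] z).1)
    (fun k => (ev k).1) (fun k => (od k).1.2)
    (fun k => by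
      show ((fc c)^[2*k+1+1] z).1 = _
      rw [fc_succ c z (2*k+1)]
      have : ((fc c)^[2*k+1] z).2 = ((fc c)^[2*k] z).1 := by rw [fc_succ]
      simp only [this]; ring)
    (fun k => by
      show ((fc c)^[2*(k+1)+1] z).1 = _
      rw [fc_succ c z (2*(k+1))]
      have : ((fc c)^[2*(k+1)] z).2 = ((fc c)^[2*k+1] z).1 := by
        show ((fc c)^[2*k+1+1] z).2 = _
        rw [fc_succ]
      simp only [this])
  have hx := even_odd (fun n => ((fc c)^[n] z).1) a key.1 key.2
  have hy : Tendsto (fun n => ((fc c)^[n] z).2) atTop (𝓝 a) := by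
    rw [← tendsto_add_atTop_iff_nat 1]
    simpa only [fc_succ] using hx
  exact hx.prodMk_nhds hy

theorem stmt4 (c : ℝ) (hc1 : -1 < c) (hc2 : c < 0) :
    {z : ℝ × ℝ | Tendsto (fun n => (fc c)^[n] z) atTop (𝓝 (a2 c, a2 c))} =
      ⋂ n : ℕ, (fc c)^[n] ⁻¹'
        (Icc (0 : ℝ) (a2 c) ×ˢ Ici (a2 c) ∪ Ici (a2 c) ×ˢ Icc (0 : ℝ) (a2 c)) := by
  obtain ⟨hc, ha⟩ := a2_eq c hc2
  generalize a2 c = a at *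
  ext z
  simp only [mem_ofPred_eq, mem_iInter, mem_preimage]
  constructor
  · intro hz
    have hx : Tendsto (fun n => ((fc c)^[n] z).1) atTop (𝓝 a) :=
      (continuous_fst.tendsto _).comp hz
    have hy : Tendsto (fun n => ((fc c)^[n] z).2) atTop (𝓝 a) :=
      (continuous_snd.tendsto _).comp hz
    have step : ∀ n, (fc c)^[n+1] z ∈ Icc (0 : ℝ) a ×ˢ Ici a ∪ Ici a ×ˢ Icc (0 : ℝ) a →
        (fc c)^[n] z ∈ Icc (0 : ℝ) a ×ˢ Ici a ∪ Ici a ×ˢ Icc (0 : ℝ) a := by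
      intro n hn
      rw [fc_succ] at hn
      simp only [mem_union, mem_prod, mem_Icc, mem_Ici] at hn ⊢
      generalize ((fc c)^[n] z).1 = x at *
      generalize ((fc c)^[n] z).2 = y at *
      rcases hn with ⟨⟨p, q⟩, r⟩ | ⟨p, q, r⟩
      · right
        refine ⟨r, ?_, ?_⟩
        · by_contra hh
          push Not at hh
          nlinarith
        · by_contra hh
          push Not at hh
          nlinarith
      · left
        refine ⟨⟨q, r⟩, ?_⟩
        by_contra hh
        push Not at hh
        rcases q.eq_or_lt with q | q
        · rw [← q] at p
          linarith
        · have w1 := mul_lt_mul_of_pos_left hh q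
          have w2 := mul_le_mul_of_nonneg_right r (show 0 ≤ a by linarith)
          nlinarith
    have down : ∀ k n, (fc c)^[n+k] z ∈ Icc (0 : ℝ) a ×ˢ Ici a ∪ Ici a ×ˢ Icc (0 : ℝ) a →
        (fc c)^[n] z ∈ Icc (0 : ℝ) a ×ˢ Ici a ∪ Ici a ×ˢ Icc (0 : ℝ) a := by
      intro k
      induction k with
      | zero => intro n hn; exact hn
      | succ k ih => intro n hn; exact ih n (step _ hn)
    obtain ⟨N, hN⟩ := eventually_atTop.1 ((hx.eventually (lt_mem_nhds (show 0 < a by linarith))).and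
      (hy.eventually (lt_mem_nhds (show 0 < a by linarith))))
    intro n
    apply down N
    have hM : N ≤ n + N := by omega
    generalize n + N = M at hM
    by_contra hcon
    have hpos := hN M hM
    have cases : (a < ((fc c)^[M] z).1 ∧ a < ((fc c)^[M] z).2) ∨
        (((fc c)^[M] z).1 < a ∧ ((fc c)^[M] z).2 < a) := by
      simp only [mem_union, mem_prod, mem_Icc, mem_Ici] at hcon
      generalize ((fc c)^[M] z).1 = x at *
      generalize ((fc c)^[M] z).2 = y at *
      push Not at hcon
      obtain ⟨q1, q2⟩ := hcon
      rcases lt_trichotomy x a with h | h | h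
      · exact Or.inr ⟨h, q1 ⟨hpos.1.le, h.le⟩⟩
      · have := q1 ⟨hpos.1.le, h.le⟩
        have := q2 h.ge hpos.2.le
        linarith
      · exact Or.inl ⟨h, q2 h.le hpos.2.le⟩
    have hx' := (tendsto_add_atTop_iff_nat M).2 hx
    rcases cases with h | h
    · have inv : ∀ k, ((fc c)^[M] z).1 ≤ ((fc c)^[k+M] z).1 ∧ a < ((fc c)^[k+M] z).2 := by
        intro k
        induction k with
        | zero => simpa using h.2
        | succ k ih =>
          rw [show k + 1 + M = k + M + 1 by omega, fc_succ]
          refine ⟨?_, by simp only; linarith⟩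
          simp only
          nlinarith
      have := ge_of_tendsto' hx' (fun k => (inv k).1)
      linarith
    · have inv : ∀ k, ((fc c)^[k+M] z).1 ≤ ((fc c)^[M] z).1 ∧ ((fc c)^[k+M] z).2 < a := by
        intro k
        induction k with
        | zero => simpa using h.2
        | succ k ih =>
          have hp := (hN (k+M) (by omega)).1
          rw [show k + 1 + M = k + M + 1 by omega, fc_succ]
          refine ⟨?_, by simp only; linarith⟩
          simp only
          nlinarith
      have := le_of_tendsto' hx' (fun k => (inv k).1)
      linarith
  · intro h
    by_cases h0 : z ∈ Ici a ×ˢ Icc (0 : ℝ) a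
    · exact back a c ha hc z h h0
    · have hA := (h 0).resolve_right h0
      have h1 := h 1
      have hB : fc c z ∈ Ici a ×ˢ Icc (0 : ℝ) a := by
        simp only [Function.iterate_one, Function.iterate_zero, id, fc, mem_union, mem_prod,
          mem_Icc, mem_Ici] at h1 hA ⊢
        rcases h1 with h1 | h1
        · have : z.1 = a := by linarith
          rw [this] at *
          refine ⟨?_, by linarith, le_rfl⟩
          nlinarith
        · exact h1
      have := back a c ha hc (fc c z) (fun n => by
        rw [← Function.iterate_succ_apply]; exact h (n+1)) hB
      rw [← tendsto_add_atTop_iff_nat 1]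
      simpa only [Function.iterate_succ_apply] using this
end

section
/- Let c ∈ ℝ with -1 < c < 0. Then f(R₀) ⊆ R₀ ∪ R₁, f(R₁) ⊆ R₂, f(R₂) ⊆ R₂ ∪ R₃ and f(R₃) ⊆ R₁. -/
open Set Filter Topology

theorem stmt6 (c : ℝ) (hc1 : -1 < c) (hc2 : c < 0) :
    fc c '' (Icc (0 : ℝ) (1 + c) ×ˢ Icc (0 : ℝ) (a2 c)) ⊆
      Icc (0 : ℝ) (1 + c) ×ˢ Icc (0 : ℝ) (a2 c) ∪ Icc (-1 : ℝ) 0 ×ˢ Icc (0 : ℝ) (1 + c) ∧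
    fc c '' (Icc (-1 : ℝ) 0 ×ˢ Icc (0 : ℝ) (1 + c)) ⊆ Icc (-1 : ℝ) 0 ×ˢ Icc (-1 : ℝ) 0 ∧
    fc c '' (Icc (-1 : ℝ) 0 ×ˢ Icc (-1 : ℝ) 0) ⊆
      Icc (-1 : ℝ) 0 ×ˢ Icc (-1 : ℝ) 0 ∪ Icc (0 : ℝ) (1 + c) ×ˢ Icc (-1 : ℝ) 0 ∧
    fc c '' (Icc (0 : ℝ) (1 + c) ×ˢ Icc (-1 : ℝ) 0) ⊆ Icc (-1 : ℝ) 0 ×ˢ Icc (0 : ℝ) (1 + c) := by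
  have hs := Real.sq_sqrt (show (0:ℝ) ≤ 1 - 4 * c by linarith)
  have hs1 : 1 ≤ Real.sqrt (1 - 4 * c) := Real.one_le_sqrt.mpr (by linarith)
  have ha1 : 1 ≤ a2 c := by unfold a2; linarith
  have hac : c = a2 c - a2 c ^ 2 := by unfold a2; nlinarith
  have hk : (1 + c) * a2 c ≤ 1 := by
    have h1 : 0 ≤ (a2 c - 1) ^ 2 * (a2 c + 1) := by positivity
    have h2 : (1 + c) * a2 c = (1 + (a2 c - a2 c ^ 2)) * a2 c := by rw [← hac]
    rw [h2]; nlinarith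
  generalize a2 c = a at *
  refine ⟨?_, ?_, ?_, ?_⟩ <;> rintro _ ⟨⟨x, y⟩, ⟨⟨hx0, hx1⟩, hy0, hy1⟩, rfl⟩ <;>
    simp only [fc, mem_union, mem_prod, mem_Icc] at *
  · have h1 : x * y ≤ (1 + c) * a := mul_le_mul hx1 hy1 hy0 (by linarith)
    have h2 : 0 ≤ x * y := mul_nonneg hx0 hy0
    rcases le_total 0 (x * y + c) with h | h
    · left; refine ⟨⟨h, ?_⟩, ?_, ?_⟩ <;> linarith
    · right; refine ⟨⟨?_, h⟩, ?_, ?_⟩ <;> linarith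
  · refine ⟨⟨?_, ?_⟩, ?_, ?_⟩ <;> nlinarith
  · have h1 : x * y ≤ 1 := by nlinarith
    have h2 : 0 ≤ x * y := mul_nonneg_of_nonpos_of_nonpos hx1 hy1
    rcases le_total 0 (x * y + c) with h | h
    · right; refine ⟨⟨h, ?_⟩, ?_, ?_⟩ <;> linarith
    · left; refine ⟨⟨?_, h⟩, ?_, ?_⟩ <;> linarith
  · refine ⟨⟨?_, ?_⟩, ?_, ?_⟩ <;> nlinarith
end

section
/- Let c ∈ ℝ with -1 < c < 0. There exists N ∈ ℕ such that fⁿ(𝓡) ⊆ R' for all n ≥ N. -/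
open Set Filter Topology

def Rp (c : ℝ) : Set (ℝ × ℝ) :=
  Icc (-1 : ℝ) 0 ×ˢ Icc (0 : ℝ) (1 + c) ∪ Icc (-1 : ℝ) 0 ×ˢ Icc (-1 : ℝ) 0 ∪
          Icc (0 : ℝ) (1 + c) ×ˢ Icc (-1 : ℝ) 0

theorem mem_Rp (c x y : ℝ) : (x, y) ∈ Rp c ↔
    ((-1 ≤ x ∧ x ≤ 0) ∧ 0 ≤ y ∧ y ≤ 1 + c ∨ (-1 ≤ x ∧ x ≤ 0) ∧ -1 ≤ y ∧ y ≤ 0) ∨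
      (0 ≤ x ∧ x ≤ 1 + c) ∧ -1 ≤ y ∧ y ≤ 0 := by
  simp only [Rp, mem_union, mem_prod, mem_Icc]

theorem Rp_inv (c : ℝ) (hc1 : -1 < c) (hc2 : c < 0) (p : ℝ × ℝ) (hp : p ∈ Rp c) :
    fc c p ∈ Rp c := by
  obtain ⟨x, y⟩ := p
  rw [mem_Rp] at hp
  simp only [fc]
  rw [mem_Rp]
  rcases hp with (⟨⟨h1, h2⟩, h3, h4⟩ | ⟨⟨h1, h2⟩, h3, h4⟩) | ⟨⟨h1, h2⟩, h3, h4⟩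
  · left; right
    refine ⟨⟨by nlinarith, by nlinarith⟩, h1, h2⟩
  · rcases le_total (x * y + c) 0 with h | h
    · left; right
      exact ⟨⟨by nlinarith, h⟩, h1, h2⟩
    · right
      exact ⟨⟨h, by nlinarith⟩, h1, h2⟩
  · left; left
    refine ⟨⟨by nlinarith, by nlinarith⟩, h1, h2⟩

theorem R0_step (c : ℝ) (hc1 : -1 < c) (x y : ℝ) (hx : 0 ≤ x) (hx' : x ≤ 1 + c)
    (hy : 0 ≤ y) (hxy : x * y ≤ 1) :
    fc c (x, y) ∈ Rp c ∨ (0 ≤ x * y + c ∧ x * y + c ≤ 1 + c) := by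
  have := mul_nonneg hx hy
  rcases le_total (x * y + c) 0 with h | h
  · left
    simp only [fc]
    rw [mem_Rp]
    left; left
    exact ⟨⟨by linarith, h⟩, hx, hx'⟩
  · right
    exact ⟨h, by linarith⟩

theorem a2_bound (c : ℝ) (hc1 : -1 < c) (hc2 : c < 0) : (1 + c) * a2 c ≤ 1 := by
  have hs := Real.sq_sqrt (show 0 ≤ 1 - 4 * c by linarith)
  have h0 := Real.sqrt_nonneg (1 - 4 * c)
  have ha : c = a2 c - a2 c ^ 2 := by unfold a2; nlinarith
  have hp : 0 ≤ a2 c := by unfold a2; linarith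
  generalize a2 c = a at *
  subst ha
  nlinarith [mul_nonneg (sq_nonneg (a - 1)) (show 0 ≤ a + 1 by linarith)]

theorem stmt7 (c : ℝ) (hc1 : -1 < c) (hc2 : c < 0) :
    ∃ N : ℕ, ∀ n ≥ N,
      (fc c)^[n] '' (Icc (-1 : ℝ) 0 ×ˢ Icc (0 : ℝ) (1 + c) ∪ Icc (-1 : ℝ) 0 ×ˢ Icc (-1 : ℝ) 0 ∪
          Icc (0 : ℝ) (1 + c) ×ˢ Icc (-1 : ℝ) 0 ∪ Icc (0 : ℝ) (1 + c) ×ˢ Icc (0 : ℝ) (a2 c)) ⊆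
        Icc (-1 : ℝ) 0 ×ˢ Icc (0 : ℝ) (1 + c) ∪ Icc (-1 : ℝ) 0 ×ˢ Icc (-1 : ℝ) 0 ∪
          Icc (0 : ℝ) (1 + c) ×ˢ Icc (-1 : ℝ) 0 := by
  change ∃ N : ℕ, ∀ n ≥ N,
      (fc c)^[n] '' (Rp c ∪ Icc (0 : ℝ) (1 + c) ×ˢ Icc (0 : ℝ) (a2 c)) ⊆ Rp c
  have key : ∀ p ∈ Rp c ∪ Icc (0 : ℝ) (1 + c) ×ˢ Icc (0 : ℝ) (a2 c), ∀ n : ℕ,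
      (fc c)^[n + 1] p ∈ Rp c ∨ ∃ x y : ℝ, (fc c)^[n + 1] p = (x, y) ∧
        0 ≤ x ∧ x ≤ 1 + c + n * c ∧ 0 ≤ y ∧ y ≤ 1 + c := by
    intro p hp n
    induction n with
    | zero =>
      rcases hp with hp | hp
      · left; exact Rp_inv c hc1 hc2 p hp
      · obtain ⟨x, y⟩ := p
        simp only [mem_prod, mem_Icc] at hp
        obtain ⟨⟨h1, h2⟩, h3, h4⟩ := hp
        have hb := a2_bound c hc1 hc2
        have hxy : x * y ≤ 1 :=
          (mul_le_mul h2 h4 h3 (by linarith)).trans hb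
        rcases R0_step c hc1 x y h1 h2 h3 hxy with h | ⟨h, h'⟩
        · left; exact h
        · right
          exact ⟨x * y + c, x, rfl, h, by simpa using h', h1, h2⟩
    | succ n ih =>
      rw [Function.iterate_succ_apply']
      rcases ih with h | ⟨x, y, he, h1, h2, h3, h4⟩
      · left; exact Rp_inv c hc1 hc2 _ h
      · rw [he]
        have hn : (n : ℝ) * c ≤ 0 := mul_nonpos_of_nonneg_of_nonpos (Nat.cast_nonneg n) hc2.le
        have hx : x * y ≤ x := by nlinarith
        rcases R0_step c hc1 x y h1 (by linarith) h3 (by linarith) with h | ⟨h, h'⟩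
        · left; exact h
        · right
          refine ⟨x * y + c, x, rfl, h, ?_, h1, by linarith⟩
          push_cast
          linarith
  obtain ⟨K, hK⟩ := exists_nat_gt ((1 + c) / (-c))
  rw [div_lt_iff₀ (by linarith)] at hK
  refine ⟨K + 1, fun n hn => ?_⟩
  rintro _ ⟨p, hp, rfl⟩
  obtain ⟨m, rfl⟩ : ∃ m, n = m + 1 := ⟨n - 1, by omega⟩
  rcases key p hp m with h | ⟨x, y, -, h1, h2, -, -⟩
  · exact h
  · have : (K : ℝ) ≤ m := by exact_mod_cast (by omega : K ≤ m)
    nlinarith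
end

section
/- Let c ∈ ℝ with -1 < c < 0. If z ∈ R₂ \ {p}, then there exists N ∈ ℕ such that fⁿ(z) ∈ Y for all n ≥ N. -/
open Set Filter Topology

lemma fc_Y (c : ℝ) (hc1 : -1 < c) (hc2 : c < 0) (w : ℝ × ℝ)
    (hw : w ∈ Icc c 0 ×ˢ Icc c 0) : fc c w ∈ Icc c 0 ×ˢ Icc c 0 := by
  obtain ⟨x, y⟩ := w
  simp only [fc, mem_prod, mem_Icc] at *
  obtain ⟨⟨h1, h2⟩, h3, h4⟩ := hw
  refine ⟨⟨?_, ?_⟩, h1, h2⟩ <;> nlinarith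

lemma fc_step (c : ℝ) (hc1 : -1 < c) (hc2 : c < 0) (w : ℝ × ℝ)
    (hw : w ∈ Icc (-1 : ℝ) 0 ×ˢ Icc (-1 : ℝ) 0) :
    (fc c (fc c w) ∈ Icc c 0 ×ˢ Icc c 0) ∨
    (-c < w.1 * w.2 ∧ fc c (fc c (fc c w)) ∈ Icc (-1 : ℝ) 0 ×ˢ Icc (-1 : ℝ) 0 ∧
      (fc c (fc c (fc c w))).1 * (fc c (fc c (fc c w))).2 ≤ (w.1 * w.2) * (w.1 * w.2)) := by
  obtain ⟨x, y⟩ := w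
  simp only [fc, mem_prod, mem_Icc] at *
  obtain ⟨⟨h1, h2⟩, h3, h4⟩ := hw
  have t0 : 0 ≤ x * y := by nlinarith
  have t1 : x * y ≤ 1 := by nlinarith
  generalize x * y = t at *
  rcases le_or_gt (t + c) 0 with h | h
  · left
    refine ⟨⟨?_, ?_⟩, ?_, ?_⟩ <;> nlinarith
  · right
    have a1 : (t + c) * x + c ≤ 0 := by nlinarith
    have a2 : -t ≤ (t + c) * x + c := by nlinarith
    generalize (t + c) * x + c = u at *
    have b1 : u * (t + c) + c ≤ 0 := by nlinarith
    have b2 : -t ≤ u * (t + c) + c := by nlinarith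
    generalize u * (t + c) + c = v at *
    refine ⟨by linarith, ⟨⟨?_, ?_⟩, ?_, ?_⟩, ?_⟩ <;> nlinarith

theorem stmt8 (c : ℝ) (hc1 : -1 < c) (hc2 : c < 0) (z : ℝ × ℝ)
    (hz : z ∈ Icc (-1 : ℝ) 0 ×ˢ Icc (-1 : ℝ) 0 \ {((-1, -1) : ℝ × ℝ)}) :
    ∃ N : ℕ, ∀ n ≥ N, (fc c)^[n] z ∈ Icc c 0 ×ˢ Icc c 0 := by
  suffices h : ∃ N : ℕ, (fc c)^[N] z ∈ Icc c 0 ×ˢ Icc c 0 by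
    obtain ⟨N, hN⟩ := h
    refine ⟨N, fun n hn => ?_⟩
    induction n, hn using Nat.le_induction with
    | base => exact hN
    | succ n hn ih =>
      rw [Function.iterate_succ_apply']
      exact fc_Y c hc1 hc2 _ ih
  by_contra hne
  push Not at hne
  obtain ⟨hz, hp⟩ := hz
  have ht0 : 0 ≤ z.1 * z.2 := by
    obtain ⟨⟨h1, h2⟩, h3, h4⟩ := hz
    nlinarith
  have ht1 : z.1 * z.2 < 1 := by
    obtain ⟨⟨h1, h2⟩, h3, h4⟩ := hz
    by_contra hge
    push Not at hge
    apply hp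
    have e1 : z.1 = -1 := by nlinarith
    have e2 : z.2 = -1 := by nlinarith
    exact Prod.ext e1 e2
  have key : ∀ k : ℕ, (fc c)^[3 * k] z ∈ Icc (-1 : ℝ) 0 ×ˢ Icc (-1 : ℝ) 0 ∧
      ((fc c)^[3 * k] z).1 * ((fc c)^[3 * k] z).2 ≤ (z.1 * z.2) ^ (k + 1) ∧
      -c < ((fc c)^[3 * k] z).1 * ((fc c)^[3 * k] z).2 := by
    have hlt : ∀ k : ℕ, (fc c)^[3 * k] z ∈ Icc (-1 : ℝ) 0 ×ˢ Icc (-1 : ℝ) 0 → _ :=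
      fun k hk => (fc_step c hc1 hc2 _ hk).resolve_left (by
        have := hne (3 * k + 2)
        rwa [Function.iterate_succ_apply', Function.iterate_succ_apply'] at this)
    intro k
    induction k with
    | zero => exact ⟨hz, by simp, (hlt 0 hz).1⟩
    | succ k ih =>
      obtain ⟨i1, i2, i3⟩ := ih
      obtain ⟨j1, j2, j3⟩ := hlt k i1
      have e : (fc c)^[3 * (k + 1)] z = fc c (fc c (fc c ((fc c)^[3 * k] z))) := by
        rw [← Function.iterate_succ_apply' (fc c), ← Function.iterate_succ_apply' (fc c),
          ← Function.iterate_succ_apply' (fc c)]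
        rfl
      have m : (fc c)^[3 * (k + 1)] z ∈ Icc (-1 : ℝ) 0 ×ˢ Icc (-1 : ℝ) 0 := by
        rw [e]; exact j2
      refine ⟨m, ?_, (hlt (k + 1) m).1⟩
      rw [e]
      refine j3.trans ?_
      have hk : (z.1 * z.2) ^ (k + 1) ≤ z.1 * z.2 :=
        pow_le_of_le_one ht0 ht1.le (by omega)
      rw [pow_succ _ (k + 1)]
      exact mul_le_mul i2 (i2.trans hk) (by linarith) (by positivity)
  obtain ⟨k, hk⟩ := exists_pow_lt_of_lt_one (neg_pos.mpr hc2) ht1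
  obtain ⟨-, h2, h3⟩ := key k
  have : (z.1 * z.2) ^ (k + 1) ≤ (z.1 * z.2) ^ k :=
    pow_le_pow_of_le_one ht0 ht1.le (by omega)
  linarith
end

section
/- Let c ∈ ℝ with -1 < c < 0. Then f(RR) ⊆ SS ∪ TT, f(SS) ⊆ TT, f(TT) ⊆ UU ∪ RR and f(UU) ⊆ RR. -/
open Set Filter Topology

theorem stmt9 (c : ℝ) (hc1 : -1 < c) (hc2 : c < 0) :
    fc c '' (Icc (a1 c) 0 ×ˢ Icc c (a1 c)) ⊆
      Icc (a1 c) 0 ×ˢ Icc (a1 c) 0 ∪ Icc c (a1 c) ×ˢ Icc (a1 c) 0 ∧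
    fc c '' (Icc (a1 c) 0 ×ˢ Icc (a1 c) 0) ⊆ Icc c (a1 c) ×ˢ Icc (a1 c) 0 ∧
    fc c '' (Icc c (a1 c) ×ˢ Icc (a1 c) 0) ⊆
      Icc c (a1 c) ×ˢ Icc c (a1 c) ∪ Icc (a1 c) 0 ×ˢ Icc c (a1 c) ∧
    fc c '' (Icc c (a1 c) ×ˢ Icc c (a1 c)) ⊆ Icc (a1 c) 0 ×ˢ Icc c (a1 c) := by
  have hs : Real.sqrt (1 - 4 * c) ^ 2 = 1 - 4 * c := Real.sq_sqrt (by linarith)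
  have hs0 : 0 ≤ Real.sqrt (1 - 4 * c) := Real.sqrt_nonneg _
  have ha : a1 c * a1 c + c = a1 c := by unfold a1; nlinarith
  have ha0 : a1 c < 0 := by unfold a1; nlinarith
  generalize a1 c = a at ha ha0
  have hca : c ≤ a := by nlinarith
  refine ⟨?_, ?_, ?_, ?_⟩ <;> rintro _ ⟨⟨x, y⟩, ⟨⟨h1, h2⟩, h3, h4⟩, rfl⟩ <;>
    simp only [fc, mem_union, mem_prod, mem_Icc] at h1 h2 h3 h4 ⊢
  · have p : 0 ≤ x * y := by nlinarith
    have q : x * y + c ≤ 0 := by nlinarith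
    rcases le_total a (x * y + c) with h | h
    · exact Or.inl ⟨⟨h, q⟩, h1, h2⟩
    · exact Or.inr ⟨⟨by linarith, h⟩, h1, h2⟩
  · have p : 0 ≤ x * y := by nlinarith
    have q : x * y ≤ a * a := by nlinarith
    exact ⟨⟨by linarith, by linarith⟩, h1, h2⟩
  · have p : 0 ≤ x * y := by nlinarith
    have q : x * y + c ≤ 0 := by nlinarith
    rcases le_total a (x * y + c) with h | h
    · exact Or.inr ⟨⟨h, q⟩, h1, h2⟩
    · exact Or.inl ⟨⟨by linarith, h⟩, h1, h2⟩
  · have p : a * a ≤ x * y := by nlinarith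
    have q : x * y ≤ c * c := by nlinarith
    exact ⟨⟨by linarith, by nlinarith⟩, h1, h2⟩
end

section
/- Let c ∈ ℝ with -3/4 < c < 0. If z ∈ Y, then fⁿ(z) → (a₁,a₁) as n → +∞. -/
open Set Filter Topology

/-- nested bounds -/
noncomputable def bx (c : ℝ) : ℕ → ℝ × ℝ
  | 0 => (c, 0)
  | k + 1 => ((bx c k).2 ^ 2 + c, (bx c k).1 ^ 2 + c)

lemma bx_inv (c : ℝ) (hc1 : -3/4 < c) (hc2 : c < 0) (k : ℕ) :
    c ≤ (bx c k).1 ∧ (bx c k).1 ≤ (bx c k).2 ∧ (bx c k).2 ≤ 0 ∧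
    (bx c k).1 ≤ (bx c (k+1)).1 ∧ (bx c (k+1)).2 ≤ (bx c k).2 := by
  induction k with
  | zero => simp only [bx]; refine ⟨?_, ?_, ?_, ?_, ?_⟩ <;> nlinarith
  | succ k ih =>
    obtain ⟨h1, h2, h3, h4, h5⟩ := ih
    have e1 : (bx c (k+1)).1 = (bx c k).2 ^ 2 + c := rfl
    have e2 : (bx c (k+1)).2 = (bx c k).1 ^ 2 + c := rfl
    have e3 : (bx c (k+1+1)).1 = (bx c (k+1)).2 ^ 2 + c := rfl
    have e4 : (bx c (k+1+1)).2 = (bx c (k+1)).1 ^ 2 + c := rfl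
    have h6 : (bx c (k+1)).1 ≤ (bx c (k+1)).2 := by rw [e1, e2]; nlinarith
    have h7 : (bx c (k+1)).2 ≤ 0 := h5.trans h3
    refine ⟨h1.trans h4, h6, h7, ?_, ?_⟩
    · rw [e3]; nth_rewrite 1 [e1]; nlinarith
    · rw [e4]; nth_rewrite 1 [e2]; nlinarith

lemma mul_box {c m M x y : ℝ} (hM : M ≤ 0) (hx : x ∈ Icc m M) (hy : y ∈ Icc m M) :
    x * y + c ∈ Icc (M ^ 2 + c) (m ^ 2 + c) := by
  obtain ⟨a, b⟩ := hx
  obtain ⟨d, e⟩ := hy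
  constructor
  · nlinarith [mul_nonneg (sub_nonneg.2 b) (sub_nonneg.2 e), mul_nonneg (neg_nonneg.2 hM) (sub_nonneg.2 b), mul_nonneg (neg_nonneg.2 hM) (sub_nonneg.2 e)]
  · nlinarith [mul_nonneg (sub_nonneg.2 a) (neg_nonneg.2 (e.trans hM)), mul_nonneg (sub_nonneg.2 d) (neg_nonneg.2 ((a.trans b).trans hM))]

lemma orbit_box (c : ℝ) (hc1 : -3/4 < c) (hc2 : c < 0) (z : ℝ × ℝ)
    (hz : z ∈ Icc c 0 ×ˢ Icc c 0) (k : ℕ) : ∀ n, 2 * k ≤ n →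
    ((fc c)^[n] z).1 ∈ Icc (bx c k).1 (bx c k).2 ∧
    ((fc c)^[n] z).2 ∈ Icc (bx c k).1 (bx c k).2 := by
  induction k with
  | zero =>
    intro n _
    induction n with
    | zero => exact hz
    | succ n ih =>
      obtain ⟨h1, h2⟩ := ih (by omega)
      rw [Function.iterate_succ_apply']
      refine ⟨?_, h1⟩
      have := mul_box (c := c) le_rfl h1 h2
      simp only [bx, fc] at this ⊢
      obtain ⟨p, q⟩ := this
      exact ⟨by linarith, by nlinarith⟩
  | succ k ih =>
    intro n hn
    obtain ⟨m, rfl⟩ : ∃ m, n = m + 1 + 1 := ⟨n - 2, by omega⟩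
    obtain ⟨h1, h2⟩ := ih m (by omega)
    obtain ⟨h3, h4⟩ := ih (m+1) (by omega)
    have hM := (bx_inv c hc1 hc2 k).2.2.1
    have A := mul_box (c := c) hM h1 h2
    have B := mul_box (c := c) hM h3 h4
    rw [Function.iterate_succ_apply']
    refine ⟨B, ?_⟩
    change ((fc c)^[m+1] z).1 ∈ _
    rw [Function.iterate_succ_apply']
    exact A

lemma bx_lim (c : ℝ) (hc1 : -3/4 < c) (hc2 : c < 0) :
    Tendsto (fun k => (bx c k).1) atTop (𝓝 (a1 c)) ∧
    Tendsto (fun k => (bx c k).2) atTop (𝓝 (a1 c)) := by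
  have I := bx_inv c hc1 hc2
  have hu : Monotone (fun k => (bx c k).1) := monotone_nat_of_le_succ fun k => (I k).2.2.2.1
  have hv : Antitone (fun k => (bx c k).2) := antitone_nat_of_succ_le fun k => (I k).2.2.2.2
  have tu := tendsto_atTop_ciSup hu ⟨0, by rintro _ ⟨k, rfl⟩; exact (I k).2.1.trans (I k).2.2.1⟩
  have tv := tendsto_atTop_ciInf hv ⟨c, by rintro _ ⟨k, rfl⟩; exact (I k).1.trans (I k).2.1⟩
  generalize (⨆ k, (bx c k).1) = U at tu
  generalize (⨅ k, (bx c k).2) = V at tv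
  have e1 : U = V ^ 2 + c :=
    tendsto_nhds_unique (tu.comp (tendsto_add_atTop_nat 1)) ((tv.pow 2).add_const c)
  have e2 : V = U ^ 2 + c :=
    tendsto_nhds_unique (tv.comp (tendsto_add_atTop_nat 1)) ((tu.pow 2).add_const c)
  have hV : V ≤ 0 := le_of_tendsto' tv fun k => (I k).2.2.1
  have hUV : U = V := by
    have : (U - V) * (1 + U + V) = 0 := by linear_combination e1 - e2
    rcases mul_eq_zero.1 this with h | h
    · linarith
    · nlinarith [sq_nonneg (2 * V + 1)]
  subst hUV
  have : a1 c = U := by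
    unfold a1
    have : 1 - 4 * c = (1 - 2 * U) ^ 2 := by linear_combination 4 * e1
    rw [this, Real.sqrt_sq (by linarith)]
    ring
  rw [this]
  exact ⟨tu, tv⟩

theorem stmt10 (c : ℝ) (hc1 : -3/4 < c) (hc2 : c < 0) (z : ℝ × ℝ)
    (hz : z ∈ Icc c 0 ×ˢ Icc c 0) :
    Tendsto (fun n => (fc c)^[n] z) atTop (𝓝 (a1 c, a1 c)) := by
  obtain ⟨tu, tv⟩ := bx_lim c hc1 hc2
  have hh : Tendsto (fun n : ℕ => n / 2) atTop atTop :=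
    Nat.tendsto_div_const_atTop (by norm_num)
  have O := fun n : ℕ => orbit_box c hc1 hc2 z hz (n / 2) n (by omega)
  exact Tendsto.prodMk_nhds
    (tendsto_of_tendsto_of_tendsto_of_le_of_le (tu.comp hh) (tv.comp hh)
      (fun n => (O n).1.1) (fun n => (O n).1.2))
    (tendsto_of_tendsto_of_tendsto_of_le_of_le (tu.comp hh) (tv.comp hh)
      (fun n => (O n).2.1) (fun n => (O n).2.2))
end

section
/- Let c ∈ ℝ with -1 < c ≤ -3/4. If z ∈ Y, then fⁿ(z) → (a₁,a₁) as n → +∞. -/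
open Set Filter Topology

lemma alg11 (d m M x y x' y' z z' : ℝ) (hd1 : d < 1) (hm : 0 < m) (hMd : M ≤ d)
    (hx : m ≤ x) (hy : m ≤ y) (hyM : y ≤ M) (hz : z ≤ M)
    (hy' : m ≤ y') (hyM' : y' ≤ M) (hz' : m ≤ z')
    (e1 : M = d - x * y) (e2 : x = d - y * z) (e3 : m = d - x' * y') (e4 : x' = d - y' * z') :
    M = m := by
  have hmM : m ≤ M := hy.trans hyM
  have hM0 : 0 < M := hm.trans_le hmM
  have hy0 : 0 < y := hm.trans_le hy
  have hy0' : 0 < y' := hm.trans_le hy'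
  have key : M + m * M ≤ d ∨ M + m ≤ d ∨ M = m := by
    rcases le_total (y * M) (d - m) with h | h
    · left
      have h1 : M ≤ d - d * y + M * y ^ 2 := by
        have := mul_le_mul_of_nonneg_left hz (mul_pos hy0 hy0).le
        rw [e2] at e1; nlinarith
      have h2 : 0 ≤ (y - m) * (d - m - y * M) := mul_nonneg (by linarith) (by linarith)
      have h3 : 0 ≤ (y - m) * (m * (1 - M)) :=
        mul_nonneg (by linarith) (mul_nonneg hm.le (by linarith))
      have h4 : M ≤ d - m * d + m ^ 2 * M := by nlinarith
      have h5 : 0 ≤ (1 - m) * (d - (M + m * M)) := by nlinarith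
      have := nonneg_of_mul_nonneg_right h5 (by linarith)
      linarith
    · right
      have h1 : m * y ≤ x * y := mul_le_mul_of_nonneg_right hx hy0.le
      have h2 : M * M ≤ (d - m * y) * M := mul_le_mul_of_nonneg_right (by linarith) hM0.le
      have h3 := mul_le_mul_of_nonneg_left h hm.le
      have h4 : 0 ≤ (M - m) * (d - (M + m)) := by nlinarith
      rcases hmM.eq_or_lt with h5 | h5
      · right; exact h5.symm
      · left
        have := nonneg_of_mul_nonneg_right h4 (by linarith)
        linarith
  have g1 : d - d * y' + m * y' ^ 2 ≤ m := by
    have := mul_le_mul_of_nonneg_left hz' (mul_pos hy0' hy0').le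
    rw [e4] at e3; nlinarith
  have hmMM : m * M < M := by nlinarith
  have hmMm : m * M < m := by nlinarith
  rcases le_total (2 * m * M) d with h | h
  · have g2 : 0 ≤ (M - y') * (d - m * (M + y')) :=
      mul_nonneg (by linarith) (by nlinarith)
    have g3 : 0 ≤ (1 - M) * (m + m * M - d) := by nlinarith
    have g4 := nonneg_of_mul_nonneg_right g3 (by linarith)
    rcases key with k | k | k
    · linarith
    · linarith
    · exact k
  · rcases key with k | k | k
    · linarith
    · nlinarith [sq_nonneg (M - m)]
    · exact k

lemma clus11 (d : ℝ) (u : ℕ → ℝ) (hu : ∀ n, u n ∈ Icc 0 d)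
    (hr : ∀ n, u (n + 2) = d - u (n + 1) * u n) (w : ℝ) (hw : MapClusterPt w atTop u) :
    ∃ x y z, MapClusterPt x atTop u ∧ MapClusterPt y atTop u ∧ MapClusterPt z atTop u ∧
      w = d - x * y ∧ x = d - y * z := by
  obtain ⟨U, hU, hw⟩ := mapClusterPt_iff_ultrafilter.1 hw
  have ex : ∀ k : ℕ, ∃ x, MapClusterPt x atTop u ∧ Tendsto (fun n : ℕ => u (n - k)) U (𝓝 x) := by
    intro k
    obtain ⟨x, -, hx⟩ := (isCompact_Icc (a := (0:ℝ)) (b := d)).ultrafilter_le_nhds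
      (U.map (fun n : ℕ => u (n - k))) (tendsto_principal.2 (Eventually.of_forall (fun n : ℕ => hu (n - k))))
    have hx' : Tendsto (fun n : ℕ => u (n - k)) U (𝓝 x) := hx
    refine ⟨x, ?_, hx'⟩
    refine MapClusterPt.of_comp (φ := fun n : ℕ => n - k) (p := (U : Filter ℕ))
      ((tendsto_sub_atTop_nat k).mono_left hU) ?_
    exact Tendsto.mapClusterPt hx'
  obtain ⟨x, hx, tx⟩ := ex 1
  obtain ⟨y, hy, ty⟩ := ex 2
  obtain ⟨z, hz, tz⟩ := ex 3
  refine ⟨x, y, z, hx, hy, hz, ?_, ?_⟩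
  · refine tendsto_nhds_unique hw (Tendsto.congr' ?_ ((tx.mul ty).const_sub d))
    filter_upwards [hU (eventually_ge_atTop 3)] with n hn
    obtain ⟨k, rfl⟩ := Nat.exists_eq_add_of_le' hn
    exact (hr (k + 1)).symm
  · refine tendsto_nhds_unique tx (Tendsto.congr' ?_ ((ty.mul tz).const_sub d))
    filter_upwards [hU (eventually_ge_atTop 3)] with n hn
    obtain ⟨k, rfl⟩ := Nat.exists_eq_add_of_le' hn
    exact (hr k).symm

lemma conv11 (d a : ℝ) (hd0 : 0 < d) (hd1 : d < 1) (ha : 0 ≤ a) (had : a + a * a = d)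
    (u : ℕ → ℝ) (hu : ∀ n, u n ∈ Icc 0 d)
    (hr : ∀ n, u (n + 2) = d - u (n + 1) * u n) : Tendsto u atTop (𝓝 a) := by
  have hcl : IsClosed {x | MapClusterPt x atTop u} := isClosed_setOfPred_clusterPt
  have hsub : {x | MapClusterPt x atTop u} ⊆ Icc 0 d := by
    intro x hx
    exact isClosed_Icc.mem_of_mapClusterPt hx (Eventually.of_forall hu)
  have hcomp : IsCompact {x | MapClusterPt x atTop u} :=
    isCompact_Icc.of_isClosed_subset hcl hsub
  have hne : {x | MapClusterPt x atTop u}.Nonempty := by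
    obtain ⟨x, -, hx⟩ := (isCompact_Icc (a := (0:ℝ)) (b := d)).exists_mapClusterPt
      (f := atTop) (u := u) (tendsto_principal.2 (Eventually.of_forall hu))
    exact ⟨x, hx⟩
  obtain ⟨M, hM, hMu⟩ := hcomp.exists_isGreatest hne
  obtain ⟨m, hm, hmu⟩ := hcomp.exists_isLeast hne
  obtain ⟨x, y, z, hx, hy, hz, e1, e2⟩ := clus11 d u hu hr M hM
  obtain ⟨x', y', z', hx', hy', hz', e3, e4⟩ := clus11 d u hu hr m hm
  have hm0 : 0 < m := by
    have h1 := hsub hx'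
    have h2 := hsub hy'
    have := mul_le_mul h1.2 h2.2 h2.1 hd0.le
    nlinarith
  have hMm : M = m := alg11 d m M x y x' y' z z' hd1 hm0 (hsub hM).2 (hmu hx) (hmu hy) (hMu hy)
    (hMu hz) (hmu hy') (hMu hy') (hmu hz') e1 e2 e3 e4
  have hall : ∀ p, MapClusterPt p atTop u → p = m := fun p hp =>
    le_antisymm (hMm ▸ hMu hp) (hmu hp)
  have hma : m = a := by
    rw [hall _ hx', hall _ hy'] at e3
    have : (m - a) * (1 + m + a) = 0 := by nlinarith
    rcases mul_eq_zero.1 this with h | h <;> linarith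
  refine (isCompact_Icc (a := (0:ℝ)) (b := d)).tendsto_nhds_of_unique_mapClusterPt
    (Eventually.of_forall hu) ?_
  intro p _ hp
  rw [hall p hp, hma]

theorem stmt11 (c : ℝ) (hc1 : -1 < c) (hc2 : c ≤ -3/4) (z : ℝ × ℝ)
    (hz : z ∈ Icc c 0 ×ˢ Icc c 0) :
    Tendsto (fun n => (fc c)^[n] z) atTop (𝓝 (a1 c, a1 c)) := by
  have hinv : ∀ n, (fc c)^[n] z ∈ Icc c 0 ×ˢ Icc c 0 := by
    intro n
    induction n with
    | zero => exact hz
    | succ n ih =>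
      rw [Function.iterate_succ_apply']
      obtain ⟨⟨h1, h2⟩, h3, h4⟩ := ih
      refine ⟨⟨?_, ?_⟩, h1, h2⟩
      · simp only [fc]; nlinarith
      · simp only [fc]; nlinarith
  have hs : ∀ n, (fc c)^[n + 1] z =
      (((fc c)^[n] z).1 * ((fc c)^[n] z).2 + c, ((fc c)^[n] z).1) := fun n => by
    rw [Function.iterate_succ_apply']; rfl
  have hsq : 0 ≤ 1 - 4 * c := by linarith
  have hq := Real.mul_self_sqrt hsq
  have h1 : 1 ≤ Real.sqrt (1 - 4 * c) := Real.one_le_sqrt.2 (by linarith)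
  have key := conv11 (-c) (-a1 c) (by linarith) (by linarith) (by unfold a1; linarith)
    (by unfold a1; nlinarith) (fun n => -((fc c)^[n] z).1)
    (fun n => ⟨by linarith [(hinv n).1.2], by linarith [(hinv n).1.1]⟩)
    (fun n => by
      have e1 := congrArg Prod.fst (hs (n + 1))
      have e2 := congrArg Prod.snd (hs n)
      simp only at e1 e2
      rw [e2] at e1
      show -((fc c)^[n + 1 + 1] z).1 = _
      rw [e1]; ring)
  have k1 : Tendsto (fun n => ((fc c)^[n] z).1) atTop (𝓝 (a1 c)) := by
    simpa using key.neg
  have k2 : Tendsto (fun n => ((fc c)^[n] z).2) atTop (𝓝 (a1 c)) := by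
    rw [← tendsto_add_atTop_iff_nat 1]
    refine k1.congr fun n => ?_
    rw [hs]
  exact k1.prodMk_nhds k2
end

section
/- Let c ∈ ℝ with -1 < c < 0. Then: (1) f(A) ⊆ B ∪ R₀ ∪ R₁ ∪ H₁ ∪ H₂; (2) f(B) ⊆ D ∪ R₂; (3) f(C) ⊆ N ∪ E; (4) f(D) ⊆ E ∪ F ∪ P; (5) f(E) ⊆ R₂ ∪ R₃ ∪ G; (6) f(F) ⊆ R₁ ∪ C; (7) f(G) ⊆ M ∪ B; (8) f(H₁) ⊆ B ∪ R₀ ∪ H₁; (9) f(H₂) ⊆ B ∪ A ∪ L. -/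
open Set Filter Topology

theorem stmt12 (c : ℝ) (hc1 : -1 < c) (hc2 : c < 0) :
    fc c '' (Icc (0 : ℝ) (a2 c) ×ˢ Ici (a2 c)) ⊆
      Icc (-1 : ℝ) 0 ×ˢ Ici (1 + c) ∪ Icc (0 : ℝ) (1 + c) ×ˢ Icc (0 : ℝ) (a2 c) ∪
      Icc (-1 : ℝ) 0 ×ˢ Icc (0 : ℝ) (1 + c) ∪ Icc (1 + c) (a2 c) ×ˢ Icc (0 : ℝ) (a2 c) ∪
      Ici (a2 c) ×ˢ Icc (0 : ℝ) (a2 c) ∧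
    fc c '' (Icc (-1 : ℝ) 0 ×ˢ Ici (1 + c)) ⊆
      Iic (-1 : ℝ) ×ˢ Icc (-1 : ℝ) 0 ∪ Icc (-1 : ℝ) 0 ×ˢ Icc (-1 : ℝ) 0 ∧
    fc c '' (Iic (-1 : ℝ) ×ˢ Icc (0 : ℝ) (1 + c)) ⊆
      Iic (-1 : ℝ) ×ˢ Iic (-1 : ℝ) ∪ Icc (-1 : ℝ) 0 ×ˢ Iic (-1 : ℝ) ∧
    fc c '' (Iic (-1 : ℝ) ×ˢ Icc (-1 : ℝ) 0) ⊆
      Icc (-1 : ℝ) 0 ×ˢ Iic (-1 : ℝ) ∪ Icc (0 : ℝ) (1 + c) ×ˢ Iic (-1 : ℝ) ∪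
      Ici (1 + c) ×ˢ Iic (-1 : ℝ) ∧
    fc c '' (Icc (-1 : ℝ) 0 ×ˢ Iic (-1 : ℝ)) ⊆
      Icc (-1 : ℝ) 0 ×ˢ Icc (-1 : ℝ) 0 ∪ Icc (0 : ℝ) (1 + c) ×ˢ Icc (-1 : ℝ) 0 ∪
      Ici (1 + c) ×ˢ Icc (-1 : ℝ) 0 ∧
    fc c '' (Icc (0 : ℝ) (1 + c) ×ˢ Iic (-1 : ℝ)) ⊆
      Icc (-1 : ℝ) 0 ×ˢ Icc (0 : ℝ) (1 + c) ∪ Iic (-1 : ℝ) ×ˢ Icc (0 : ℝ) (1 + c) ∧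
    fc c '' (Ici (1 + c) ×ˢ Icc (-1 : ℝ) 0) ⊆
      Iic (-1 : ℝ) ×ˢ Ici (1 + c) ∪ Icc (-1 : ℝ) 0 ×ˢ Ici (1 + c) ∧
    fc c '' (Icc (1 + c) (a2 c) ×ˢ Icc (0 : ℝ) (a2 c)) ⊆
      Icc (-1 : ℝ) 0 ×ˢ Ici (1 + c) ∪ Icc (0 : ℝ) (1 + c) ×ˢ Icc (0 : ℝ) (a2 c) ∪
      Icc (1 + c) (a2 c) ×ˢ Icc (0 : ℝ) (a2 c) ∧
    fc c '' (Ici (a2 c) ×ˢ Icc (0 : ℝ) (a2 c)) ⊆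
      Icc (-1 : ℝ) 0 ×ˢ Ici (1 + c) ∪ Icc (0 : ℝ) (a2 c) ×ˢ Ici (a2 c) ∪
      Ici (a2 c) ×ˢ Ici (a2 c) := by
  have hs : Real.sqrt (1 - 4 * c) ^ 2 = 1 - 4 * c := Real.sq_sqrt (by linarith)
  have hs1 : 1 < Real.sqrt (1 - 4 * c) := by
    rw [Real.lt_sqrt] <;> linarith
  have ha1 : 1 < a2 c := by unfold a2; linarith
  have ha2 : a2 c * a2 c + c = a2 c := by unfold a2; linarith
  generalize a2 c = a at *
  refine ⟨?_, ?_, ?_, ?_, ?_, ?_, ?_, ?_, ?_⟩ <;> rintro _ ⟨⟨x, y⟩, h, rfl⟩ <;>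
    simp only [fc, mem_union, mem_prod, mem_Icc, mem_Ici, mem_Iic] at h ⊢ <;>
    obtain ⟨h1, h2⟩ := h
  · have hp : 0 ≤ x * y := mul_nonneg (by linarith) (by linarith)
    generalize x * y = p at *
    grind
  · have hp : x * y ≤ 0 := mul_nonpos_of_nonpos_of_nonneg (by linarith) (by linarith)
    generalize x * y = p at *
    grind
  · have hp : x * y ≤ 0 := mul_nonpos_of_nonpos_of_nonneg (by linarith) (by linarith)
    generalize x * y = p at *
    grind
  · have hp : 0 ≤ x * y := mul_nonneg_of_nonpos_of_nonpos (by linarith) (by linarith)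
    generalize x * y = p at *
    grind
  · have hp : 0 ≤ x * y := mul_nonneg_of_nonpos_of_nonpos (by linarith) (by linarith)
    generalize x * y = p at *
    grind
  · have hp : x * y ≤ 0 := mul_nonpos_of_nonneg_of_nonpos (by linarith) (by linarith)
    generalize x * y = p at *
    grind
  · have hp : x * y ≤ 0 := mul_nonpos_of_nonneg_of_nonpos (by linarith) (by linarith)
    generalize x * y = p at *
    grind
  · have hp : 0 ≤ x * y := mul_nonneg (by linarith) (by linarith)
    have hq : x * y ≤ a * a := mul_le_mul h1.2 h2.2 h2.1 (by linarith)
    generalize x * y = p at *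
    grind
  · have hp : 0 ≤ x * y := mul_nonneg (by linarith) (by linarith)
    generalize x * y = p at *
    grind
end

section
/- Let c ∈ ℝ with -1 < c < 0. If fⁿ(z) ∈ A ∪ H₂ for all n ≥ 0, then fⁿ(z) → θ as n → ∞; that is, ⋂_{n=0}^{∞} f^{-n}(A ∪ H₂) ⊆ W^s(θ). -/
open Set Filter Topology

theorem aux_A (c a : ℝ) (ha : 0 < a) (hc : c = a - a * a) (hc2 : c < 0) (z : ℕ → ℝ × ℝ)
    (hz : ∀ n, z (n+1) = ((z n).1 * (z n).2 + c, (z n).1))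
    (hD : ∀ n, (0 ≤ (z n).1 ∧ (z n).1 ≤ a ∧ a ≤ (z n).2) ∨ (a ≤ (z n).1 ∧ 0 ≤ (z n).2 ∧ (z n).2 ≤ a))
    (h0 : 0 ≤ (z 0).1 ∧ (z 0).1 ≤ a ∧ a ≤ (z 0).2) :
    Tendsto z atTop (𝓝 (a, a)) := by
  have AH : ∀ n, (0 ≤ (z n).1 ∧ (z n).1 ≤ a ∧ a ≤ (z n).2) →
      (a ≤ (z (n+1)).1 ∧ 0 ≤ (z (n+1)).2 ∧ (z (n+1)).2 ≤ a) := by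
    intro n ⟨h1, h2, h3⟩
    have h := hD (n+1)
    rw [hz n] at h ⊢
    simp only at h ⊢
    rcases h with ⟨k1, k2, k3⟩ | h
    · have e : (z n).1 = a := le_antisymm h2 k3
      rw [e] at *
      refine ⟨by nlinarith, ha.le, le_rfl⟩
    · exact h
  have HA : ∀ n, (a ≤ (z n).1 ∧ 0 ≤ (z n).2 ∧ (z n).2 ≤ a) →
      (0 ≤ (z (n+1)).1 ∧ (z (n+1)).1 ≤ a ∧ a ≤ (z (n+1)).2) := by
    intro n ⟨h1, h2, h3⟩
    have h := hD (n+1)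
    rw [hz n] at h ⊢
    simp only at h ⊢
    rcases h with h | ⟨k1, k2, k3⟩
    · exact h
    · have e : (z n).1 = a := le_antisymm k3 h1
      rw [e] at *
      refine ⟨by nlinarith, by nlinarith, le_rfl⟩
  have hE : ∀ k, (0 ≤ (z (2*k)).1 ∧ (z (2*k)).1 ≤ a ∧ a ≤ (z (2*k)).2) := by
    intro k
    induction k with
    | zero => exact h0
    | succ k ih => exact HA _ (AH _ ih)
  have hrec : ∀ k, z (2*(k+1)) = (((z (2*k)).1 * (z (2*k)).2 + c) * (z (2*k)).1 + c,
      (z (2*k)).1 * (z (2*k)).2 + c) := by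
    intro k
    rw [show 2*(k+1) = 2*k+1+1 by ring, hz, hz]
  have hY : Antitone fun k => (z (2*k)).2 := by
    apply antitone_nat_of_succ_le
    intro k
    obtain ⟨p1, p2, p3⟩ := hE k
    obtain ⟨q1, q2, q3⟩ := hE (k+1)
    have r := (AH _ (hE k)).1
    rw [hz] at r
    rw [hrec k] at q1 q2 q3 ⊢
    simp only at *
    have hx : 0 < (z (2*k)).1 := by
      rcases p1.lt_or_eq with h | h
      · exact h
      · rw [← h] at r; linarith
    by_contra hcon
    push Not at hcon
    nlinarith
  have hX : Monotone fun k => (z (2*k)).1 := by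
    apply monotone_nat_of_le_succ
    intro k
    obtain ⟨q1, q2, q3⟩ := hE (k+1)
    have r := (AH _ (hE (k+1))).1
    rw [hz] at r
    have h1 : (z (2*(k+1))).1 = (z (2*(k+1))).2 * (z (2*k)).1 + c := by rw [hrec k]
    simp only at *
    by_contra hcon
    push Not at hcon
    nlinarith
  obtain ⟨X, hXl⟩ : ∃ X, Tendsto (fun k => (z (2*k)).1) atTop (𝓝 X) :=
    ⟨_, tendsto_atTop_ciSup hX ⟨a, by rintro _ ⟨k, rfl⟩; exact (hE k).2.1⟩⟩
  obtain ⟨Y, hYl⟩ : ∃ Y, Tendsto (fun k => (z (2*k)).2) atTop (𝓝 Y) :=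
    ⟨_, tendsto_atTop_ciInf hY ⟨a, by rintro _ ⟨k, rfl⟩; exact (hE k).2.2⟩⟩
  have hXa : X ≤ a := le_of_tendsto' hXl fun k => (hE k).2.1
  have hYa : a ≤ Y := ge_of_tendsto' hYl fun k => (hE k).2.2
  have e1 : Y = X * Y + c := by
    refine tendsto_nhds_unique (hYl.comp (tendsto_add_atTop_nat 1)) ?_
    refine ((hXl.mul hYl).add_const c).congr fun k => ?_
    simp [hrec k]
  have e2 : X = (X * Y + c) * X + c := by
    refine tendsto_nhds_unique (hXl.comp (tendsto_add_atTop_nat 1)) ?_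
    refine ((((hXl.mul hYl).add_const c).mul hXl).add_const c).congr fun k => ?_
    simp [hrec k]
  have e3 : X = Y := by rw [← e1] at e2; linarith
  have e4 : X = a := by linarith
  have e5 : Y = a := by linarith
  subst e4
  rw [e5] at hYl
  have hev : Tendsto (fun k => z (2*k)) atTop (𝓝 (X, X)) := hXl.prodMk_nhds hYl
  have hodd : Tendsto (fun k => z (2*k+1)) atTop (𝓝 (X, X)) := by
    have := ((hXl.mul hYl).add_const c).prodMk_nhds hXl
    rw [show X * X + c = X by linarith] at this
    exact this.congr fun k => (hz _).symm
  rw [tendsto_def] at *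
  intro s hs
  have h1 := hev s hs
  have h2 := hodd s hs
  simp only [mem_atTop_sets, mem_preimage] at *
  obtain ⟨N, hN⟩ := h1
  obtain ⟨M, hM⟩ := h2
  refine ⟨2 * N + 2 * M, fun b hb => ?_⟩
  rcases Nat.even_or_odd' b with ⟨k, rfl | rfl⟩
  · exact hN k (by omega)
  · exact hM k (by omega)

theorem stmt13 (c : ℝ) (hc1 : -1 < c) (hc2 : c < 0) :
    (⋂ n : ℕ, (fc c)^[n] ⁻¹'
        (Icc (0 : ℝ) (a2 c) ×ˢ Ici (a2 c) ∪ Ici (a2 c) ×ˢ Icc (0 : ℝ) (a2 c))) ⊆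
      {z : ℝ × ℝ | Tendsto (fun n => (fc c)^[n] z) atTop (𝓝 (a2 c, a2 c))} := by
  intro z hz
  have ha : 0 < a2 c := by
    unfold a2
    positivity
  have hc : c = a2 c - a2 c * a2 c := by
    have := Real.mul_self_sqrt (show 0 ≤ 1 - 4 * c by linarith)
    unfold a2
    linarith
  have hD : ∀ n, (0 ≤ ((fc c)^[n] z).1 ∧ ((fc c)^[n] z).1 ≤ a2 c ∧ a2 c ≤ ((fc c)^[n] z).2) ∨
      (a2 c ≤ ((fc c)^[n] z).1 ∧ 0 ≤ ((fc c)^[n] z).2 ∧ ((fc c)^[n] z).2 ≤ a2 c) := by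
    intro n
    have := mem_iInter.1 hz n
    simpa [mem_prod, and_assoc] using this
  have hs : ∀ n, (fc c)^[n+1] z =
      (((fc c)^[n] z).1 * ((fc c)^[n] z).2 + c, ((fc c)^[n] z).1) := by
    intro n
    rw [Function.iterate_succ_apply']
    rfl
  show Tendsto (fun n => (fc c)^[n] z) atTop (𝓝 (a2 c, a2 c))
  rcases hD 0 with h | h
  · exact aux_A c _ ha hc hc2 _ hs hD h
  · rcases hD 1 with h1 | h1
    · rw [← tendsto_add_atTop_iff_nat 1]
      exact aux_A c _ ha hc hc2 (fun n => (fc c)^[n+1] z) (fun n => hs _) (fun n => hD _) h1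
    · refine aux_A c _ ha hc hc2 _ hs hD ?_
      rw [hs 0] at h1
      simp only at h1
      have e := le_antisymm h1.2.2 h.1
      rw [e] at h1 ⊢
      exact ⟨ha.le, le_rfl, by nlinarith [h1.1]⟩
end

section
/- Let c ∈ ℝ with -1 < c < 0. If z ∈ H₁ \ {(a₂,a₂)}, then there exists N ∈ ℕ such that f^N(z) ∉ H₁. -/
open Set Filter Topology

theorem stmt14 (c : ℝ) (hc1 : -1 < c) (hc2 : c < 0) (z : ℝ × ℝ)
    (hz : z ∈ Icc (1 + c) (a2 c) ×ˢ Icc (0 : ℝ) (a2 c) \ {((a2 c, a2 c) : ℝ × ℝ)}) :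
    ∃ N : ℕ, (fc c)^[N] z ∉ Icc (1 + c) (a2 c) ×ˢ Icc (0 : ℝ) (a2 c) := by
  by_contra hcon
  push Not at hcon
  obtain ⟨hzm, hne⟩ := hz
  have hs : Real.sqrt (1 - 4 * c) ^ 2 = 1 - 4 * c := Real.sq_sqrt (by linarith)
  have hs1 : 1 < Real.sqrt (1 - 4 * c) := by
    apply Real.lt_sqrt_of_sq_lt
    linarith
  have ha : a2 c * a2 c + c = a2 c := by
    unfold a2
    nlinarith
  have ha1 : 1 < a2 c := by
    unfold a2
    linarith
  generalize a2 c = a at *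
  have key : ∀ w : ℝ × ℝ, a - (fc c w).1 = a * (a - w.1) + w.1 * (a - w.2) := by
    intro w
    simp only [fc]
    linarith
  have hpos : 0 < a - (fc c z).1 := by
    rw [key]
    obtain ⟨⟨h1, h2⟩, h3, h4⟩ := hzm
    have hx : 0 < z.1 := by linarith
    rcases h2.lt_or_eq with h | h
    · have := mul_pos (by linarith : 0 < a) (sub_pos.2 h)
      have := mul_nonneg hx.le (sub_nonneg.2 h4)
      linarith
    · rcases h4.lt_or_eq with h' | h'
      · have := mul_pos hx (sub_pos.2 h')
        have := mul_nonneg (by linarith : 0 ≤ a) (sub_nonneg.2 h2)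
        linarith
      · exact absurd (Prod.ext h h') hne
  have hgrow : ∀ n : ℕ, a ^ n * (a - (fc c z).1) ≤ a - ((fc c)^[n + 1] z).1 := by
    intro n
    induction n with
    | zero => simp
    | succ n ih =>
      rw [Function.iterate_succ_apply', key ((fc c)^[n + 1] z)]
      obtain ⟨⟨h1, h2⟩, h3, h4⟩ := hcon (n + 1)
      have e1 := mul_nonneg (by linarith : 0 ≤ ((fc c)^[n + 1] z).1) (sub_nonneg.2 h4)
      have e2 := mul_le_mul_of_nonneg_left ih (by linarith : 0 ≤ a)
      rw [pow_succ]
      linarith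
  obtain ⟨n, hn⟩ := pow_unbounded_of_one_lt (a / (a - (fc c z).1)) ha1
  rw [div_lt_iff₀ hpos] at hn
  obtain ⟨⟨h1, h2⟩, h3, h4⟩ := hcon (n + 1)
  have := hgrow n
  linarith
end

section
/- Let c ∈ ℝ with -1 < c < 0. If fⁿ(z) → θ as n → ∞, then fⁿ(z) ∈ A ∪ H₂ for all n ≥ 0; that is, W^s(θ) ⊆ ⋂_{n=0}^{∞} f^{-n}(A ∪ H₂). -/
open Set Filter Topology

lemma back_aux (c a : ℝ) (hc2 : c < 0) (ha : 1 < a) (hq : a * a + c = a) (z : ℝ × ℝ)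
    (h : fc c z ∈ (Icc (0 : ℝ) a ×ˢ Ici a ∪ Ici a ×ˢ Icc (0 : ℝ) a)) :
    z ∈ (Icc (0 : ℝ) a ×ˢ Ici a ∪ Ici a ×ˢ Icc (0 : ℝ) a) := by
  obtain ⟨x, y⟩ := z
  simp only [fc, mem_union, mem_prod, mem_Icc, mem_Ici] at h ⊢
  rcases h with ⟨⟨h1, h2⟩, h3⟩ | ⟨h1, h2, h3⟩
  · right
    refine ⟨h3, ?_, ?_⟩
    · by_contra hy
      push Not at hy
      nlinarith
    · by_contra hy
      push Not at hy
      nlinarith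
  · left
    refine ⟨⟨h2, h3⟩, ?_⟩
    by_contra hy
    push Not at hy
    rcases le_total y 0 with h0 | h0
    · nlinarith
    · nlinarith

theorem stmt15 (c : ℝ) (hc1 : -1 < c) (hc2 : c < 0) :
    {z : ℝ × ℝ | Tendsto (fun n => (fc c)^[n] z) atTop (𝓝 (a2 c, a2 c))} ⊆
      ⋂ n : ℕ, (fc c)^[n] ⁻¹'
        (Icc (0 : ℝ) (a2 c) ×ˢ Ici (a2 c) ∪ Ici (a2 c) ×ˢ Icc (0 : ℝ) (a2 c)) := by
  intro z hz
  have hs : Real.sqrt (1 - 4 * c) * Real.sqrt (1 - 4 * c) = 1 - 4 * c :=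
    Real.mul_self_sqrt (by linarith)
  have hs1 : 1 < Real.sqrt (1 - 4 * c) := by
    rw [Real.lt_sqrt (by norm_num)]; linarith
  have ha : 1 < a2 c := by unfold a2; linarith
  have hq : a2 c * a2 c + c = a2 c := by unfold a2; linarith
  generalize a2 c = a at *
  simp only [mem_ofPred_eq] at hz
  simp only [mem_iInter, mem_preimage]
  have hx : Tendsto (fun n => ((fc c)^[n] z).1) atTop (𝓝 a) :=
    (continuous_fst.tendsto _).comp hz
  have hy : Tendsto (fun n => ((fc c)^[n] z).2) atTop (𝓝 a) :=
    (continuous_snd.tendsto _).comp hz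
  obtain ⟨N, hN⟩ := eventually_atTop.1
    ((hx.eventually_const_lt (show (0:ℝ) < a by linarith)).and
      (hy.eventually_const_lt (show (0:ℝ) < a by linarith)))
  have s1 : ∀ m, ((fc c)^[m+1] z).1 = ((fc c)^[m] z).1 * ((fc c)^[m] z).2 + c := by
    intro m; rw [Function.iterate_succ_apply']; rfl
  have s2 : ∀ m, ((fc c)^[m+1] z).2 = ((fc c)^[m] z).1 := by
    intro m; rw [Function.iterate_succ_apply']; rfl
  have key : ∀ n, N ≤ n → (fc c)^[n] z ∈ (Icc (0 : ℝ) a ×ˢ Ici a ∪ Ici a ×ˢ Icc (0 : ℝ) a) := by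
    intro n hn
    by_contra hcon
    obtain ⟨p1, p2⟩ := hN n hn
    have hcase : (a < ((fc c)^[n] z).1 ∧ a < ((fc c)^[n] z).2) ∨
        (((fc c)^[n] z).1 < a ∧ ((fc c)^[n] z).2 < a) := by
      simp only [mem_union, mem_prod, mem_Icc, mem_Ici] at hcon
      grind
    rcases hcase with ⟨h1, h2⟩ | ⟨h1, h2⟩
    · have inv : ∀ m, n ≤ m → ((fc c)^[n] z).1 ≤ ((fc c)^[m] z).1 ∧ a ≤ ((fc c)^[m] z).2 := by
        intro m hm
        induction m, hm using Nat.le_induction with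
        | base => exact ⟨le_rfl, h2.le⟩
        | succ m hm ih =>
          obtain ⟨i1, i2⟩ := ih
          rw [s1, s2]
          refine ⟨?_, by linarith⟩
          nlinarith [mul_nonneg (show 0 ≤ ((fc c)^[m] z).1 by linarith) (sub_nonneg.2 i2)]
      have := ge_of_tendsto hx (eventually_atTop.2 ⟨n, fun m hm => (inv m hm).1⟩)
      linarith
    · have inv : ∀ m, n ≤ m → ((fc c)^[m] z).1 ≤ ((fc c)^[n] z).1 ∧ ((fc c)^[m] z).2 ≤ a := by
        intro m hm
        induction m, hm using Nat.le_induction with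
        | base => exact ⟨le_rfl, h2.le⟩
        | succ m hm ih =>
          obtain ⟨i1, i2⟩ := ih
          rw [s1, s2]
          refine ⟨?_, by linarith⟩
          nlinarith [mul_nonneg (hN m (hn.trans hm)).1.le (sub_nonneg.2 i2)]
      have := le_of_tendsto hx (eventually_atTop.2 ⟨n, fun m hm => (inv m hm).1⟩)
      linarith
  have desc : ∀ k n, N ≤ n + k →
      (fc c)^[n] z ∈ (Icc (0 : ℝ) a ×ˢ Ici a ∪ Ici a ×ˢ Icc (0 : ℝ) a) := by
    intro k
    induction k with
    | zero => intro n hn; exact key n hn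
    | succ k ih =>
      intro n hn
      apply back_aux c a hc2 ha hq
      rw [← Function.iterate_succ_apply' (fc c) n z]
      exact ih (n+1) (by omega)
  intro n
  exact desc N n (by omega)
end
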